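/- arXiv:1811.03693 — 5 statements merged into one kernel-verified Lean document; each statement's English description precedes it below -/
import Mathlib

section
/- There exists a constant C, depending only on the dimension d, such that the following holds for all ε > 0. For i = 1, 2, let Ū_i ∈ C(𝕋^d) be bounded and let Û_i ∈ C²(𝕋^d) satisfy ε² Δ Û_i = e^{Ū_i + Û_i} − 1 pointwise on 𝕋^d. Then ε² ∫_{𝕋^d} |∇Û_1 − ∇Û_2|² dx ≤ exp[ C ( max_i sup_x |Ū_i(x)| + max_i sup_x |Û_i(x)| ) ] · ∫_{𝕋^d} |Ū_1 − Ū_2|² dx. -/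
open MeasureTheory Real Set
open scoped ENNReal

noncomputable section

/-- The fundamental domain `[0,1)^d` of the flat torus `𝕋^d = ℝ^d/ℤ^d`. -/
def Tcube (d : ℕ) : Set (Fin d → ℝ) := Set.univ.pi fun _ => Set.Ico (0:ℝ) 1

/-- The Haar (Lebesgue) probability measure on the torus `𝕋^d`, realised as Lebesgue
measure restricted to the fundamental domain `[0,1)^d`. -/
def torusMeasure (d : ℕ) : Measure (Fin d → ℝ) := volume.restrict (Tcube d)

/-- The Euclidean norm on `ℝ^d`. -/
def euclNorm {d : ℕ} (v : Fin d → ℝ) : ℝ := Real.sqrt (∑ i, (v i) ^ 2)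

/-- The lattice vector in `ℝ^d` associated to `k ∈ ℤ^d`. -/
def latVec {d : ℕ} (k : Fin d → ℤ) : Fin d → ℝ := fun i => (k i : ℝ)

/-- `ℤ^d`-periodicity of a function on `ℝ^d`; such functions are exactly the functions
on the torus `𝕋^d`. -/
def ZPeriodic {d : ℕ} {α : Type*} (f : (Fin d → ℝ) → α) : Prop :=
  ∀ (x : Fin d → ℝ) (k : Fin d → ℤ), f (x + latVec k) = f x

/-- The quotient (flat) metric on the torus `𝕋^d`, expressed on representatives in `ℝ^d`. -/
def tdist {d : ℕ} (x y : Fin d → ℝ) : ℝ := ⨅ k : Fin d → ℤ, euclNorm (x - y + latVec k)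

/-- The gradient of a scalar function on `ℝ^d`, as an `ℝ^d`-valued function. -/
def grad {d : ℕ} (U : (Fin d → ℝ) → ℝ) (x : Fin d → ℝ) : Fin d → ℝ :=
  fun i => fderiv ℝ U x (Pi.single i 1)

/-- The Laplacian: the sum of the second partial derivatives. -/
def lap {d : ℕ} (U : (Fin d → ℝ) → ℝ) (x : Fin d → ℝ) : ℝ :=
  ∑ i, fderiv ℝ (fun y => fderiv ℝ U y (Pi.single i 1)) x (Pi.single i 1)

/-- The Hessian matrix of second partial derivatives. -/
def hess {d : ℕ} (U : (Fin d → ℝ) → ℝ) (x : Fin d → ℝ) : Fin d → Fin d → ℝ :=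
  fun i j => fderiv ℝ (fun y => fderiv ℝ U y (Pi.single j 1)) x (Pi.single i 1)

/-- Frobenius (Euclidean) norm of a `d × d` matrix. -/
def frobNorm {d : ℕ} (M : Fin d → Fin d → ℝ) : ℝ := Real.sqrt (∑ i, ∑ j, (M i j) ^ 2)

/-- Euclidean dot product on `ℝ^d`. -/
def dotP {d : ℕ} (v w : Fin d → ℝ) : ℝ := ∑ i, v i * w i

/-- `HolderBnd α u K` expresses that the Hölder norm `‖u‖_{C^{0,α}(𝕋^d)}`, i.e. the sup
norm plus the `α`-Hölder seminorm with respect to the torus metric, is at most `K`. -/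
def HolderBnd {d : ℕ} (α : ℝ) (u : (Fin d → ℝ) → ℝ) (K : ℝ) : Prop :=
  ∃ A B : ℝ, 0 ≤ A ∧ 0 ≤ B ∧ A + B ≤ K ∧ (∀ x, |u x| ≤ A) ∧
    ∀ x y, |u x - u y| ≤ B * tdist x y ^ α

/-- Hölder norm bound for an `ℝ^d`-valued function, with the Euclidean norm on values. -/
def HolderBndVec {d : ℕ} (α : ℝ) (G : (Fin d → ℝ) → Fin d → ℝ) (K : ℝ) : Prop :=
  ∃ A B : ℝ, 0 ≤ A ∧ 0 ≤ B ∧ A + B ≤ K ∧ (∀ x, euclNorm (G x) ≤ A) ∧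
    ∀ x y, euclNorm (G x - G y) ≤ B * tdist x y ^ α

/-- Hölder norm bound for a matrix-valued function. -/
def HolderBndMat {d : ℕ} (α : ℝ) (M : (Fin d → ℝ) → Fin d → Fin d → ℝ) (K : ℝ) : Prop :=
  ∃ A B : ℝ, 0 ≤ A ∧ 0 ≤ B ∧ A + B ≤ K ∧ (∀ x, frobNorm (M x) ≤ A) ∧
    ∀ x y, frobNorm (M x - M y) ≤ B * tdist x y ^ α

/-- `C1Bnd α u K` expresses `‖u‖_{C^{1,α}(𝕋^d)} ≤ K` (the `C^{0,α}` norm of `u` plus the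
`C^{0,α}` norm of its gradient is at most `K`). -/
def C1Bnd {d : ℕ} (α : ℝ) (u : (Fin d → ℝ) → ℝ) (K : ℝ) : Prop :=
  ∃ K₀ K₁ : ℝ, 0 ≤ K₀ ∧ 0 ≤ K₁ ∧ K₀ + K₁ ≤ K ∧
    HolderBnd α u K₀ ∧ HolderBndVec α (grad u) K₁

/-- `C2Bnd α u K` expresses that the second derivatives of `u` are `α`-Hölder continuous
and `‖u‖_{C^{2,α}(𝕋^d)} ≤ K`. -/
def C2Bnd {d : ℕ} (α : ℝ) (u : (Fin d → ℝ) → ℝ) (K : ℝ) : Prop :=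
  ∃ K₀ K₁ K₂ : ℝ, 0 ≤ K₀ ∧ 0 ≤ K₁ ∧ 0 ≤ K₂ ∧ K₀ + K₁ + K₂ ≤ K ∧
    HolderBnd α u K₀ ∧ HolderBndVec α (grad u) K₁ ∧ HolderBndMat α (hess u) K₂

/-- A coupling of two measures: a measure on the product whose marginals are `μ` and `ν`. -/
def IsCoupling {X : Type*} [MeasurableSpace X] (cpl : Measure (X × X)) (μ ν : Measure X) : Prop :=
  cpl.map Prod.fst = μ ∧ cpl.map Prod.snd = ν

/-- `W_q^q`: the `q`-th power of the Wasserstein distance of order `q` on the torus,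
defined as the infimum over couplings of the integral of the `q`-th power of the torus
distance. -/
def WassPow {d : ℕ} (q : ℝ) (μ ν : Measure (Fin d → ℝ)) : ℝ :=
  sInf { c | ∃ cpl : Measure ((Fin d → ℝ) × (Fin d → ℝ)), IsProbabilityMeasure cpl ∧
    IsCoupling cpl μ ν ∧ c = ∫ z, tdist z.1 z.2 ^ q ∂cpl }

/-- The Wasserstein distance of order `p` on the torus. -/
def Wass {d : ℕ} (p : ℝ) (μ ν : Measure (Fin d → ℝ)) : ℝ :=
  sInf { c | ∃ cpl : Measure ((Fin d → ℝ) × (Fin d → ℝ)), IsProbabilityMeasure cpl ∧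
    IsCoupling cpl μ ν ∧ c = (∫ z, tdist z.1 z.2 ^ p ∂cpl) ^ (1/p) }

/-- The measure `h dx` on the torus associated to a density `h`. -/
def densMeasure {d : ℕ} (h : (Fin d → ℝ) → ℝ) : Measure (Fin d → ℝ) :=
  (torusMeasure d).withDensity fun x => ENNReal.ofReal (h x)

/-- The `L^p(𝕋^d)` norm (as a real number). -/
def LpNorm {d : ℕ} (p : ℝ≥0∞) (u : (Fin d → ℝ) → ℝ) : ℝ :=
  (eLpNorm u p (torusMeasure d)).toReal

/-- `U` is a weak solution of `ε² Δ U = g` on the torus: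
`ε² ∫ ∇U·∇φ dx = −∫ g φ dx` for every smooth (periodic) test function `φ`. -/
def IsWeakPoisson {d : ℕ} (ε : ℝ) (U g : (Fin d → ℝ) → ℝ) : Prop :=
  ∀ φ : (Fin d → ℝ) → ℝ, ContDiff ℝ (⊤ : ℕ∞) φ → ZPeriodic φ →
    ε ^ 2 * ∫ x, dotP (grad U x) (grad φ x) ∂(torusMeasure d) =
      - ∫ x, g x * φ x ∂(torusMeasure d)

end
noncomputable section

/-- The rescaled mollifier `χ_r(x) = r^{-d} χ(x/r)` on `ℝ^d`. -/
def scaledMollifier {d : ℕ} (χ : (Fin d → ℝ) → ℝ) (r : ℝ) (x : Fin d → ℝ) : ℝ :=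
  (r ^ d)⁻¹ * χ (fun i => x i / r)

/-- The `ℤ^d`-periodisation of a function on `ℝ^d`, giving a function on the torus. -/
def periodised {d : ℕ} (g : (Fin d → ℝ) → ℝ) (x : Fin d → ℝ) : ℝ :=
  ∑' k : Fin d → ℤ, g (x + latVec k)

/-- The measure `χ_r ∗ μ` on the torus: the measure with density
`x ↦ ∫ χ_r(x − y) dμ(y)` with respect to the Haar measure (with `χ_r` periodised). -/
def mollifyMeasure {d : ℕ} (χ : (Fin d → ℝ) → ℝ) (r : ℝ) (μ : Measure (Fin d → ℝ)) :
    Measure (Fin d → ℝ) :=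
  (torusMeasure d).withDensity fun x =>
    ENNReal.ofReal (∫ y, periodised (scaledMollifier χ r) (x - y) ∂μ)

/-- A Borel probability measure on the torus `𝕋^d`, realised as a probability measure on
`ℝ^d` carried by the fundamental domain. -/
def IsTorusProb {d : ℕ} (μ : Measure (Fin d → ℝ)) : Prop :=
  IsProbabilityMeasure μ ∧ μ (Tcube d)ᶜ = 0

/-- The set `A_d` of allowed Hölder exponents: `(0,1)` if `d = 2`, `(0,1/5]` if `d = 3`. -/
def Aset (d : ℕ) : Set ℝ := if d = 2 then Set.Ioo 0 1 else Set.Ioc 0 (1/5)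

end
theorem aux_pt (M a b v : ℝ) (ha : a ≤ M) (hb : b ≤ M) :
    -((Real.exp a - Real.exp b) * (a - b - v)) ≤ Real.exp M * v ^ 2 := by
  have key : (Real.exp a - Real.exp b) ^ 2 ≤
      Real.exp M * ((Real.exp a - Real.exp b) * (a - b)) := by
    have hs : ∀ a b : ℝ, a ≤ M → b ≤ a → (Real.exp a - Real.exp b) ^ 2 ≤
      Real.exp M * ((Real.exp a - Real.exp b) * (a - b)) := by
      intro a b ha hab
      have h1 : Real.exp b = Real.exp a * Real.exp (b - a) := by
        rw [← Real.exp_add]; congr 1; ring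
      have h2 := Real.add_one_le_exp (b - a)
      have h3 := Real.exp_pos a
      have h4 : Real.exp a ≤ Real.exp M := Real.exp_le_exp.2 ha
      have h5 : Real.exp b ≤ Real.exp a := Real.exp_le_exp.2 hab
      have h6 : Real.exp a - Real.exp b ≤ Real.exp M * (a - b) := by
        calc Real.exp a - Real.exp b ≤ Real.exp a * (a - b) := by rw [h1]; nlinarith
          _ ≤ _ := by gcongr
      nlinarith
    rcases le_total b a with h | h
    · exact hs a b ha h
    · have := hs b a hb h
      nlinarith
  have hp := Real.exp_pos M
  set D := Real.exp a - Real.exp b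
  set E := Real.exp M
  have : 0 ≤ E * (E * v ^ 2 + D * (a - b - v)) := by
    nlinarith [sq_nonneg (D - E * v / 2), sq_nonneg (E * v)]
  have := nonneg_of_mul_nonneg_right this hp
  linarith

theorem aux_int {d : ℕ} {f : (Fin d → ℝ) → ℝ} (hf : Continuous f) :
    Integrable f (torusMeasure d) := by
  have h : IntegrableOn f (Set.Icc (fun _ => (0:ℝ)) (fun _ => 1)) volume :=
    hf.continuousOn.integrableOn_compact isCompact_Icc
  refine h.mono_set ?_
  intro x hx
  exact ⟨fun i => (hx i trivial).1, fun i => (hx i trivial).2.le⟩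

theorem aux_per {d : ℕ} {w : (Fin d → ℝ) → ℝ} (hp : ZPeriodic w) (k : Fin d → ℤ)
    (x : Fin d → ℝ) : fderiv ℝ w (x + latVec k) = fderiv ℝ w x := by
  have h : (fun y => w (y + latVec k)) = w := funext fun y => hp y k
  rw [← fderiv_comp_add_right, h]

theorem aux_ibp {d : ℕ} {w : (Fin d → ℝ) → ℝ} (hw : ContDiff ℝ 2 w) (hp : ZPeriodic w) :
    Continuous (fun x => ∑ i, (grad w x i) ^ 2 + w x * lap w x) ∧
    ∫ x, (∑ i, (grad w x i) ^ 2 + w x * lap w x) ∂(torusMeasure d) = 0 := by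
  have h1 : ContDiff ℝ 1 (fderiv ℝ w) := hw.fderiv_right (by norm_num)
  have h1i : ∀ i : Fin d, ContDiff ℝ 1 (fun y => fderiv ℝ w y (Pi.single i 1)) :=
    fun i => h1.clm_apply contDiff_const
  have hw1 : ContDiff ℝ 1 w := hw.of_le (by norm_num)
  have hc : Continuous (fun x => ∑ i, (grad w x i) ^ 2 + w x * lap w x) := by
    unfold grad lap
    refine Continuous.add (continuous_finsetSum _ fun i _ => (h1i i).continuous.pow 2) ?_
    refine hw.continuous.mul (continuous_finsetSum _ fun i _ => ?_)
    exact ((h1i i).continuous_fderiv (by norm_num)).clm_apply continuous_const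
  refine ⟨hc, ?_⟩
  rcases d with _ | n
  · simp [lap]
  have hae : torusMeasure (n+1) = volume.restrict (Set.Icc (fun _ => (0:ℝ)) (fun _ => 1)) :=
    Measure.restrict_congr_set Measure.univ_pi_Ico_ae_eq_Icc
  have hD : ∀ x (i : Fin (n+1)), HasFDerivAt (fun y => w y * fderiv ℝ w y (Pi.single i 1))
      (w x • fderiv ℝ (fun y => fderiv ℝ w y (Pi.single i 1)) x +
        (fderiv ℝ w x (Pi.single i 1)) • fderiv ℝ w x) x := fun x i =>
    ((hw1.differentiable (by norm_num)) x).hasFDerivAt.mul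
      (((h1i i).differentiable (by norm_num)) x).hasFDerivAt
  have heq : (fun x => ∑ i, (grad w x i) ^ 2 + w x * lap w x) = fun x =>
      ∑ i, (w x • fderiv ℝ (fun y => fderiv ℝ w y (Pi.single i 1)) x +
        (fderiv ℝ w x (Pi.single i 1)) • fderiv ℝ w x) (Pi.single i 1) := by
    funext x
    simp only [grad, lap, Finset.mul_sum, ← Finset.sum_add_distrib]
    refine Finset.sum_congr rfl fun i _ => ?_
    simp
    ring
  have hInt : IntegrableOn (fun x => ∑ i, (grad w x i) ^ 2 + w x * lap w x)
      (Set.Icc (fun _ => (0:ℝ)) (fun _ => 1)) volume :=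
    hc.continuousOn.integrableOn_compact isCompact_Icc
  rw [heq] at hInt
  rw [hae, heq]
  rw [integral_divergence_of_hasFDerivAt_off_countable' (fun _ => (0:ℝ)) (fun _ => 1)
    (fun _ => zero_le_one) (fun i y => w y * fderiv ℝ w y (Pi.single i 1)) _ ∅ countable_empty
    (fun i => (hw.continuous.mul (h1i i).continuous).continuousOn) (fun x _ i => hD x i) hInt]
  refine Finset.sum_eq_zero fun i _ => ?_
  rw [sub_eq_zero]
  congr 1
  funext x
  have hx : (i.insertNth (1:ℝ) x : Fin (n+1) → ℝ) =
      i.insertNth (0:ℝ) x + latVec (Pi.single i 1) := by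
    funext j
    refine Fin.succAboveCases i ?_ (fun j => ?_) j <;> simp [latVec]
  rw [hx, hp, aux_per hp]

/-- Stability estimate for the smooth parts: if `ε² Δ Û_i = e^{Ū_i+Û_i} − 1`
with `Ū_i` bounded continuous, then `ε² ‖∇Û₁ − ∇Û₂‖²_{L²} ≤ exp(C(maxᵢ sup|Ū_i| + maxᵢ
sup|Û_i|)) ‖Ū₁ − Ū₂‖²_{L²}` (stated with arbitrary upper bounds `M₁, M₂` for the sups). -/
theorem statement9 (d : ℕ) :
    ∃ C : ℝ, 0 < C ∧
      ∀ ε : ℝ, 0 < ε → ∀ M₁ M₂ : ℝ,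
      ∀ Ubar₁ Ubar₂ Uhat₁ Uhat₂ : (Fin d → ℝ) → ℝ,
        Continuous Ubar₁ → Continuous Ubar₂ →
        ZPeriodic Ubar₁ → ZPeriodic Ubar₂ →
        (∀ x, |Ubar₁ x| ≤ M₁) → (∀ x, |Ubar₂ x| ≤ M₁) →
        ContDiff ℝ 2 Uhat₁ → ContDiff ℝ 2 Uhat₂ →
        ZPeriodic Uhat₁ → ZPeriodic Uhat₂ →
        (∀ x, |Uhat₁ x| ≤ M₂) → (∀ x, |Uhat₂ x| ≤ M₂) →
        (∀ x, ε ^ 2 * lap Uhat₁ x = Real.exp (Ubar₁ x + Uhat₁ x) - 1) →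
        (∀ x, ε ^ 2 * lap Uhat₂ x = Real.exp (Ubar₂ x + Uhat₂ x) - 1) →
        ε ^ 2 * (∫ x, euclNorm (grad Uhat₁ x - grad Uhat₂ x) ^ 2 ∂(torusMeasure d)) ≤
          Real.exp (C * (M₁ + M₂)) *
            ∫ x, (Ubar₁ x - Ubar₂ x) ^ 2 ∂(torusMeasure d) := by
  refine ⟨1, one_pos, ?_⟩
  intro ε hε M₁ M₂ V₁ V₂ U₁ U₂ hV₁ hV₂ _ _ bV₁ bV₂ hU₁ hU₂ pU₁ pU₂ bU₁ bU₂ e₁ e₂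
  have hw : ContDiff ℝ 2 (fun x => U₁ x - U₂ x) := hU₁.sub hU₂
  have hp : ZPeriodic (fun x => U₁ x - U₂ x) := fun x k => by
    simp only [pU₁ x k, pU₂ x k]
  have d₁ : Differentiable ℝ U₁ := hU₁.differentiable (by norm_num)
  have d₂ : Differentiable ℝ U₂ := hU₂.differentiable (by norm_num)
  have dd : ∀ U : (Fin d → ℝ) → ℝ, ContDiff ℝ 2 U → ∀ i : Fin d,
      ContDiff ℝ 1 (fun y => fderiv ℝ U y (Pi.single i 1)) := fun U hU i =>
    (hU.fderiv_right (m := 1) (by norm_num)).clm_apply contDiff_const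
  have hf : ∀ y, fderiv ℝ (fun x => U₁ x - U₂ x) y = fderiv ℝ U₁ y - fderiv ℝ U₂ y :=
    fun y => fderiv_fun_sub (d₁ y) (d₂ y)
  have hg : ∀ x, grad (fun x => U₁ x - U₂ x) x = grad U₁ x - grad U₂ x := by
    intro x; funext i; simp [grad, hf]
  have hl : ∀ x, lap (fun x => U₁ x - U₂ x) x = lap U₁ x - lap U₂ x := by
    intro x
    simp only [lap, hf, ← Finset.sum_sub_distrib, sub_apply]
    refine Finset.sum_congr rfl fun i _ => ?_
    rw [fderiv_fun_sub ((dd U₁ hU₁ i).differentiable (by norm_num) x)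
      ((dd U₂ hU₂ i).differentiable (by norm_num) x)]
    rfl
  obtain ⟨hc, h0⟩ := aux_ibp hw hp
  have hn : ∀ x, euclNorm (grad U₁ x - grad U₂ x) ^ 2 =
      ∑ i, (grad (fun x => U₁ x - U₂ x) x i) ^ 2 := by
    intro x
    rw [euclNorm, Real.sq_sqrt (Finset.sum_nonneg fun i _ => sq_nonneg _), hg]
  have hcg : Continuous fun x => ∑ i, (grad (fun x => U₁ x - U₂ x) x i) ^ 2 :=
    continuous_finsetSum _ fun i _ => (dd _ hw i).continuous.pow 2
  simp only [hn]
  have hi2 : Integrable (fun x => Real.exp (1 * (M₁ + M₂)) * (V₁ x - V₂ x) ^ 2)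
      (torusMeasure d) := aux_int (by fun_prop)
  have := integral_mono (aux_int (hcg.const_mul (ε ^ 2)))
    (((aux_int hc).const_mul (ε ^ 2)).add hi2) (fun x => ?_)
  · simp only [Pi.add_apply] at this
    rw [integral_add ((aux_int hc).const_mul (ε ^ 2)) hi2, integral_const_mul,
      integral_const_mul, integral_const_mul, h0, mul_zero, zero_add] at this
    exact this
  · have hpt := aux_pt (M₁ + M₂) (V₁ x + U₁ x) (V₂ x + U₂ x) (V₁ x - V₂ x)
      (add_le_add (abs_le.1 (bV₁ x)).2 (abs_le.1 (bU₁ x)).2)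
      (add_le_add (abs_le.1 (bV₂ x)).2 (abs_le.1 (bU₂ x)).2)
    have hE : Real.exp (V₁ x + U₁ x) - Real.exp (V₂ x + U₂ x) =
        ε ^ 2 * (lap U₁ x - lap U₂ x) := by linarith [e₁ x, e₂ x]
    rw [hE] at hpt
    simp only [Pi.add_apply, hl, one_mul]
    linarith
end

section
/- Let d ∈ {2,3}. There exists a constant C_d > 0 such that the following holds for all ε > 0. For i = 1, 2, let h_i ∈ L^∞(𝕋^d) be a probability density; let Ū_i ∈ C¹(𝕋^d) have zero mean and be a weak solution of ε² Δ Ū_i = h_i − 1 (i.e. ε² ∫ ∇Ū_i·∇φ dx = −∫ (h_i − 1)φ dx for all smooth φ); and let Û_i ∈ C²(𝕋^d) satisfy ε² Δ Û_i = e^{Ū_i + Û_i} − 1 pointwise. Then ∫_{𝕋^d} |∇Û_1 − ∇Û_2|² dx ≤ exp( exp[ C_d ε^{−2} ( 1 + max_i ‖h_i‖_{L^{(d+2)/d}(𝕋^d)} ) ] ) · max_i ‖h_i‖_{L^∞(𝕋^d)} · W₂²(h_1 dx, h_2 dx). -/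
open MeasureTheory Real Set
open scoped ENNReal

lemma meas_comp2 {W Z Q : Type*} [MeasurableSpace W] [MeasurableSpace Z] [MeasurableSpace Q]
    {I : Z → Q → ℝ≥0∞} (hI : Measurable (Function.uncurry I)) {g : W → Z} {k : W → Q}
    (hg : Measurable g) (hk : Measurable k) : Measurable (fun w => I (g w) (k w)) :=
  hI.comp (hg.prodMk hk)

lemma meas_ballset {d : ℕ} {Z : Type*} [MeasurableSpace Z] (X : Z → Fin d → ℝ) (hX : Measurable X)
    (r : Z → ℝ) (hr : Measurable r) :
    MeasurableSet {p : Z × (Fin d → ℝ) | p.2 ∈ Metric.closedBall (X p.1) (r p.1)} := by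
  simp only [Metric.mem_closedBall]
  exact measurableSet_le (measurable_snd.dist (hX.comp measurable_fst)) (hr.comp measurable_fst)

lemma vol_inter_le {d : ℕ} (x x' : Fin d → ℝ) (a a' : ℝ) (ha' : 0 ≤ a') (h : a' ≤ a) :
    volume (Metric.closedBall x a ∩ Metric.closedBall x' a') ≤
      ENNReal.ofReal ((2 * a') ^ d) * (Metric.closedBall x (2 * a)).indicator (fun _ => 1) x' := by
  by_cases hx : x' ∈ Metric.closedBall x (2 * a)
  · simp only [hx, indicator_of_mem, mul_one]
    refine (measure_mono inter_subset_right).trans ?_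
    rw [Real.volume_pi_closedBall _ ha']; simp
  · have : Metric.closedBall x a ∩ Metric.closedBall x' a' = ∅ := by
      ext z
      simp only [mem_inter_iff, Metric.mem_closedBall, mem_empty_iff_false, iff_false, not_and]
      intro h1 h2
      apply hx
      rw [Metric.mem_closedBall]
      have := dist_triangle x' z x
      rw [dist_comm x' z] at this
      linarith
    rw [this]; simp

set_option maxHeartbeats 200000 in
lemma keyA {d : ℕ} {Z : Type*} [MeasurableSpace Z] (κ : Measure Z) [SFinite κ]
    (X : Z → Fin d → ℝ) (hX : Measurable X) (r : Z → ℝ) (hr : Measurable r) (hr0 : ∀ z, 0 ≤ r z)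
    (H : ℝ≥0∞)
    (hH : ∀ x ρ, κ (X ⁻¹' Metric.closedBall x ρ) ≤ H * volume (Metric.closedBall x ρ))
    (s : ℝ) (hs : 0 < s) (f : (Fin d → ℝ) → ℝ≥0∞) (hf : Measurable f) :
    ∫⁻ z, ENNReal.ofReal (r z * ((s * r z) ^ d)⁻¹) *
        (∫⁻ q in Metric.closedBall (X z) (s * r z), f q) ∂κ ≤
      (2 * 8 ^ d * H * ∫⁻ z, ENNReal.ofReal (r z ^ 2) ∂κ) ^ (1 / 2 : ℝ) *
        (∫⁻ q, f q ^ (2:ℝ)) ^ (1 / 2 : ℝ) := by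
  set a : Z → ℝ≥0∞ := fun z => ENNReal.ofReal (r z * ((s * r z) ^ d)⁻¹) with ha
  have ham : Measurable a := by fun_prop
  set I : Z → (Fin d → ℝ) → ℝ≥0∞ := fun z q =>
    (Metric.closedBall (X z) (s * r z)).indicator (fun _ => 1) q with hI
  have hIm : Measurable (Function.uncurry I) := by
    have : Function.uncurry I = ({p : Z × (Fin d → ℝ) | p.2 ∈ Metric.closedBall (X p.1) (s * r p.1)}).indicator (fun _ => 1) := by
      ext p; simp only [Function.uncurry, hI, indicator]; rfl
    rw [this]
    exact measurable_const.indicator (meas_ballset X hX _ (hr.const_mul s))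
  have hIm1 : ∀ z, Measurable (I z) := fun z => hIm.of_uncurry_left
  have hIm2 : ∀ q, Measurable (fun z => I z q) := fun q => hIm.of_uncurry_right
  set G : (Fin d → ℝ) → ℝ≥0∞ := fun q => ∫⁻ z, a z * I z q ∂κ with hG
  have hGm : Measurable G := by
    apply Measurable.lintegral_prod_left' (f := fun p : Z × (Fin d → ℝ) => a p.1 * I p.1 p.2)
    exact (ham.comp measurable_fst).mul hIm
  have step1 : ∫⁻ z, a z * (∫⁻ q in Metric.closedBall (X z) (s * r z), f q) ∂κ = ∫⁻ q, (G * f) q := by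
    have e1 : ∀ z, a z * ∫⁻ q in Metric.closedBall (X z) (s * r z), f q
        = ∫⁻ q, a z * I z q * f q := by
      intro z
      rw [← lintegral_indicator measurableSet_closedBall, ← lintegral_const_mul]
      · congr 1; ext q
        by_cases hq : q ∈ Metric.closedBall (X z) (s * r z) <;> simp only [hI, hq, indicator_of_mem, indicator_of_notMem, not_false_eq_true] <;> simp
      · exact hf.indicator measurableSet_closedBall
    simp_rw [e1]
    rw [lintegral_lintegral_swap]
    · congr 1; ext q
      rw [lintegral_mul_const]
      · rfl
      · exact ham.mul (hIm2 q)
    · apply Measurable.aemeasurable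
      exact ((ham.comp measurable_fst).mul hIm).mul (hf.comp measurable_snd)
  rw [step1]
  refine (ENNReal.lintegral_mul_le_Lp_mul_Lq volume (p := 2) (q := 2) ⟨by norm_num, by norm_num, by norm_num⟩
    hGm.aemeasurable hf.aemeasurable).trans ?_
  gcongr
  -- the L² bound for G
  set Φ : Z → Z → ℝ≥0∞ := fun z z' => a z * a z' *
    volume (Metric.closedBall (X z) (s * r z) ∩ Metric.closedBall (X z') (s * r z')) with hΦ
  have hvol : ∀ z z', volume (Metric.closedBall (X z) (s * r z) ∩ Metric.closedBall (X z') (s * r z'))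
      = ∫⁻ q, I z q * I z' q := by
    intro z z'
    rw [← lintegral_indicator_one (measurableSet_closedBall.inter measurableSet_closedBall)]
    congr 1; ext q
    simp only [hI, indicator, mem_inter_iff, Pi.one_apply]
    split_ifs <;> simp_all
  have hIIm : Measurable (fun p : (Z × Z) × (Fin d → ℝ) => I p.1.1 p.2 * I p.1.2 p.2) :=
    (meas_comp2 hIm (measurable_fst.comp measurable_fst) measurable_snd).mul
      (meas_comp2 hIm (measurable_snd.comp measurable_fst) measurable_snd)
  have hΦm : Measurable (Function.uncurry Φ) := by
    have : Function.uncurry Φ = fun p : Z × Z => a p.1 * a p.2 * ∫⁻ q, I p.1 q * I p.2 q := by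
      ext p; simp only [Function.uncurry, hΦ, hvol]
    rw [this]
    refine ((ham.comp measurable_fst).mul (ham.comp measurable_snd)).mul ?_
    exact Measurable.lintegral_prod_right' (f := fun p : (Z × Z) × (Fin d → ℝ) => I p.1.1 p.2 * I p.1.2 p.2) hIIm
  have hΦsymm : ∀ z z', Φ z z' = Φ z' z := by
    intro z z'; simp only [hΦ]; rw [mul_comm (a z), inter_comm]
  have step2 : ∫⁻ q, G q ^ (2:ℝ) = ∫⁻ z, ∫⁻ z', Φ z z' ∂κ ∂κ := by
    have e1 : ∀ q, G q ^ (2:ℝ) = ∫⁻ z, ∫⁻ z', (a z * I z q) * (a z' * I z' q) ∂κ ∂κ := by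
      intro q
      rw [show (2:ℝ) = ((2:ℕ):ℝ) by norm_num, ENNReal.rpow_natCast, pow_two]
      simp only [hG]
      have hm : Measurable (fun z => a z * I z q) := ham.mul (hIm2 q)
      rw [← lintegral_mul_const _ hm]
      congr 1; ext z
      rw [← lintegral_const_mul _ hm]
    simp_rw [e1]
    rw [lintegral_lintegral_swap]
    · congr 1; ext z
      rw [lintegral_lintegral_swap]
      · congr 1; ext z'
        simp only [hΦ, hvol]
        rw [← lintegral_const_mul]
        · congr 1; ext q; ring
        · exact (hIm1 z).mul (hIm1 z')
      · apply Measurable.aemeasurable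
        refine Measurable.mul ?_ ?_
        · exact ((hIm1 z).comp measurable_fst).const_mul _
        · exact (ham.comp measurable_snd).mul (meas_comp2 hIm measurable_snd measurable_fst)
    · apply Measurable.aemeasurable
      apply Measurable.lintegral_prod_right' (f := fun p : ((Fin d → ℝ) × Z) × Z => (a p.1.2 * I p.1.2 p.1.1) * (a p.2 * I p.2 p.1.1))
      refine Measurable.mul ?_ ?_
      · exact (ham.comp (measurable_snd.comp measurable_fst)).mul (meas_comp2 hIm (measurable_snd.comp measurable_fst) (measurable_fst.comp measurable_fst))
      · exact (ham.comp measurable_snd).mul (meas_comp2 hIm measurable_snd (measurable_fst.comp measurable_fst))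
  have hle : MeasurableSet {p : Z × Z | r p.2 ≤ r p.1} :=
    measurableSet_le (hr.comp measurable_snd) (hr.comp measurable_fst)
  set Ψ : Z → Z → ℝ≥0∞ := fun z z' => ({p : Z × Z | r p.2 ≤ r p.1}).indicator (Function.uncurry Φ) (z, z') with hΨ
  have hΨm : Measurable (Function.uncurry Ψ) := hΦm.indicator hle
  have hΦΨ : ∀ z z', Φ z z' ≤ Ψ z z' + Ψ z' z := by
    intro z z'
    rcases le_total (r z') (r z) with h | h
    · refine le_trans ?_ le_self_add
      simp [hΨ, indicator, h, Function.uncurry]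
    · refine le_trans ?_ le_add_self
      simp [hΨ, indicator, h, Function.uncurry, hΦsymm z z']
  have step3 : ∫⁻ z, ∫⁻ z', Φ z z' ∂κ ∂κ ≤ 2 * ∫⁻ z, ∫⁻ z', Ψ z z' ∂κ ∂κ := by
    calc ∫⁻ z, ∫⁻ z', Φ z z' ∂κ ∂κ ≤ ∫⁻ z, ∫⁻ z', (Ψ z z' + Ψ z' z) ∂κ ∂κ :=
          lintegral_mono fun z => lintegral_mono fun z' => hΦΨ z z'
      _ = ∫⁻ z, ((∫⁻ z', Ψ z z' ∂κ) + ∫⁻ z', Ψ z' z ∂κ) ∂κ := by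
          congr 1; ext z
          exact lintegral_add_left hΨm.of_uncurry_left _
      _ = (∫⁻ z, ∫⁻ z', Ψ z z' ∂κ ∂κ) + ∫⁻ z, ∫⁻ z', Ψ z' z ∂κ ∂κ :=
          lintegral_add_left (Measurable.lintegral_prod_right' (f := Function.uncurry Ψ) hΨm) _
      _ = 2 * ∫⁻ z, ∫⁻ z', Ψ z z' ∂κ ∂κ := by
          rw [two_mul, lintegral_lintegral_swap (f := fun z z' => Ψ z' z)]
          exact (hΨm.comp measurable_swap).aemeasurable
  have hΨle : ∀ z z', Ψ z z' ≤ (ENNReal.ofReal (r z * (r z * ((s * r z) ^ d)⁻¹ * 2 ^ d))) *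
      (X ⁻¹' Metric.closedBall (X z) (2 * (s * r z))).indicator (fun _ => 1) z' := by
    intro z z'
    by_cases h : r z' ≤ r z
    · have : Ψ z z' = Φ z z' := by simp [hΨ, indicator, h, Function.uncurry]
      rw [this]
      have h2 := vol_inter_le (X z) (X z') (s * r z) (s * r z') (mul_nonneg hs.le (hr0 z')) (by gcongr)
      calc Φ z z' ≤ a z * a z' * (ENNReal.ofReal ((2 * (s * r z')) ^ d) * (Metric.closedBall (X z) (2 * (s * r z))).indicator (fun _ => 1) (X z')) := by
            simp only [hΦ]; gcongr
        _ = (a z * (a z' * ENNReal.ofReal ((2 * (s * r z')) ^ d))) * (Metric.closedBall (X z) (2 * (s * r z))).indicator (fun _ => 1) (X z') := by ring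
        _ ≤ _ := by
            have hz := hr0 z
            have hz' := hr0 z'
            have : a z * (a z' * ENNReal.ofReal ((2 * (s * r z')) ^ d)) ≤ ENNReal.ofReal (r z * (r z * ((s * r z) ^ d)⁻¹ * 2 ^ d)) := by
              simp only [ha]
              rw [← ENNReal.ofReal_mul (by positivity), ← ENNReal.ofReal_mul (by positivity)]
              apply ENNReal.ofReal_le_ofReal
              have e : r z' * ((s * r z') ^ d)⁻¹ * (2 * (s * r z')) ^ d ≤ r z * 2 ^ d := by
                rcases hz'.eq_or_lt with h0 | h0
                · rw [← h0]; simp; positivity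
                · rw [mul_pow 2, mul_assoc, mul_left_comm _ (2 ^ d), inv_mul_cancel₀ (by positivity), mul_one]
                  gcongr
              calc _ ≤ r z * ((s * r z) ^ d)⁻¹ * (r z * 2 ^ d) := by gcongr
                _ = _ := by ring
            exact mul_le_mul' this le_rfl
    · have : Ψ z z' = 0 := by simp [hΨ, indicator, h]
      rw [this]; exact zero_le
  have step4 : ∀ z, ∫⁻ z', Ψ z z' ∂κ ≤ 8 ^ d * H * ENNReal.ofReal (r z ^ 2) := by
    intro z
    have hz := hr0 z
    refine (lintegral_mono (hΨle z)).trans ?_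
    rw [lintegral_const_mul _ (measurable_const.indicator (hX measurableSet_closedBall)), lintegral_indicator_const (hX measurableSet_closedBall), one_mul]
    refine (mul_le_mul' le_rfl (hH _ _)).trans ?_
    rw [Real.volume_pi_closedBall _ (by positivity), mul_left_comm, ← ENNReal.ofReal_mul (by positivity)]
    rw [show 8 ^ d * H * ENNReal.ofReal (r z ^ 2) = H * (8 ^ d * ENNReal.ofReal (r z ^ 2)) by ring]
    refine mul_le_mul' le_rfl ?_
    rw [show (8:ℝ≥0∞) ^ d = ENNReal.ofReal (8 ^ d) by rw [ENNReal.ofReal_pow (by norm_num)]; norm_num, ← ENNReal.ofReal_mul (by positivity)]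
    apply ENNReal.ofReal_le_ofReal
    simp only [Fintype.card_fin]
    rcases hz.eq_or_lt with h0 | h0
    · rw [← h0]; simp
    · apply le_of_eq
      have : (2 * (2 * (s * r z))) ^ d = 4 ^ d * (s * r z) ^ d := by rw [← mul_pow]; congr 1; ring
      rw [this, show (8:ℝ) = 2 * 4 by norm_num]
      field_simp
      rw [mul_pow]
  calc ∫⁻ q, G q ^ (2:ℝ) ≤ 2 * ∫⁻ z, ∫⁻ z', Ψ z z' ∂κ ∂κ := step2 ▸ step3
    _ ≤ 2 * ∫⁻ z, 8 ^ d * H * ENNReal.ofReal (r z ^ 2) ∂κ := by gcongr; exact step4 _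
    _ = _ := by
      rw [lintegral_const_mul _ (by fun_prop)]; ring

lemma lint_scale {d : ℕ} (f : (Fin d → ℝ) → ℝ≥0∞) (hf : Measurable f) (c : Fin d → ℝ) (ρ : ℝ)
    (hρ : 0 < ρ) (b : ℝ) :
    ∫⁻ w in Metric.closedBall 0 b, f (c + ρ • w) =
      ENNReal.ofReal ((ρ ^ d)⁻¹) * ∫⁻ q in Metric.closedBall c (ρ * b), f q := by
  rw [← lintegral_indicator measurableSet_closedBall, ← lintegral_indicator measurableSet_closedBall]
  set g : (Fin d → ℝ) → ℝ≥0∞ := fun q => (Metric.closedBall c (ρ * b)).indicator f (c + q) with hg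
  have hgm : Measurable g := (hf.indicator measurableSet_closedBall).comp (measurable_const_add c)
  have e1 : ∀ w, (Metric.closedBall (0 : Fin d → ℝ) b).indicator (fun w => f (c + ρ • w)) w = g (ρ • w) := by
    intro w
    have : w ∈ Metric.closedBall (0 : Fin d → ℝ) b ↔ c + ρ • w ∈ Metric.closedBall c (ρ * b) := by
      simp [norm_smul, abs_of_pos hρ, hρ]
    by_cases hw : w ∈ Metric.closedBall (0 : Fin d → ℝ) b
    · simp only [hg, indicator_of_mem hw, indicator_of_mem (this.1 hw)]
    · simp only [hg, indicator_of_notMem hw, indicator_of_notMem (fun h => hw (this.2 h))]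
  simp_rw [e1]
  rw [← lintegral_map (g := fun w : Fin d → ℝ => ρ • w) hgm (measurable_const_smul ρ), Measure.map_addHaar_smul _ hρ.ne',
    lintegral_smul_measure]
  simp only [hg, Module.finrank_fintype_fun_eq_card, Fintype.card_fin, smul_eq_mul]
  rw [lintegral_add_left_eq_self, abs_of_pos (by positivity)]

lemma ftc_bound {d : ℕ} (u : (Fin d → ℝ) → ℝ) (hu : ContDiff ℝ 1 u) (x z : Fin d → ℝ) (r : ℝ)
    (hz : ‖z - x‖ ≤ r) :
    ENNReal.ofReal |u x - u z| ≤ ∫⁻ t in Ioc (0:ℝ) 1, ENNReal.ofReal r * ‖fderiv ℝ u (x + t • (z - x))‖ₑ := by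
  have hd : ∀ t : ℝ, HasDerivAt (fun t : ℝ => u (x + t • (z - x))) (fderiv ℝ u (x + t • (z - x)) (z - x)) t := by
    intro t
    have h1 : HasDerivAt (fun t : ℝ => x + t • (z - x)) (z - x) t := by
      simpa using ((hasDerivAt_id t).smul_const (z - x)).const_add x
    exact ((hu.differentiable one_ne_zero _).hasFDerivAt).comp_hasDerivAt t h1
  have hc : Continuous (fun t : ℝ => fderiv ℝ u (x + t • (z - x)) (z - x)) := by
    have := hu.continuous_fderiv one_ne_zero
    fun_prop
  have := intervalIntegral.integral_eq_sub_of_hasDerivAt (a := 0) (b := 1) (fun t _ => hd t) (hc.intervalIntegrable _ _)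
  rw [intervalIntegral.integral_of_le zero_le_one] at this
  simp only [one_smul, zero_smul, add_zero, add_sub_cancel] at this
  rw [abs_sub_comm, ← this, ← Real.norm_eq_abs, ofReal_norm]
  refine (enorm_integral_le_lintegral_enorm _).trans (lintegral_mono fun t => ?_)
  refine (ContinuousLinearMap.le_opENorm _ _).trans ?_
  rw [mul_comm]
  gcongr
  rw [← ofReal_norm]
  exact ENNReal.ofReal_le_ofReal hz

lemma halfB {d : ℕ} (u : (Fin d → ℝ) → ℝ) (hu : ContDiff ℝ 1 u) (x m : Fin d → ℝ) (r : ℝ) (hr : 0 < r)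
    (hm : ‖m - x‖ ≤ r / 2) :
    ∫⁻ w in Metric.closedBall (0 : Fin d → ℝ) (1/2), ENNReal.ofReal |u x - u (m + r • w)| ≤
      ∫⁻ t in Ioc (0:ℝ) 1, ENNReal.ofReal (r * ((t * r) ^ d)⁻¹) *
        ∫⁻ q in Metric.closedBall x (t * r), ‖fderiv ℝ u q‖ₑ := by
  have hfc : Continuous (fun q => ‖fderiv ℝ u q‖ₑ) := (hu.continuous_fderiv one_ne_zero).enorm
  calc _ ≤ ∫⁻ w in Metric.closedBall (0 : Fin d → ℝ) (1/2), ∫⁻ t in Ioc (0:ℝ) 1,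
          ENNReal.ofReal r * ‖fderiv ℝ u (x + t • ((m + r • w) - x))‖ₑ := by
        refine setLIntegral_mono' measurableSet_closedBall fun w hw => ftc_bound u hu _ _ _ ?_
        rw [show m + r • w - x = (m - x) + r • w by abel]
        refine (norm_add_le _ _).trans ?_
        rw [norm_smul, Real.norm_of_nonneg hr.le]
        have : ‖w‖ ≤ 1/2 := by simpa using hw
        nlinarith
    _ = ∫⁻ t in Ioc (0:ℝ) 1, ∫⁻ w in Metric.closedBall (0 : Fin d → ℝ) (1/2),
          ENNReal.ofReal r * ‖fderiv ℝ u (x + t • ((m + r • w) - x))‖ₑ := by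
        rw [lintegral_lintegral_swap]
        apply Measurable.aemeasurable
        apply Measurable.const_mul
        exact (hfc.comp (by fun_prop : Continuous (fun p : (Fin d → ℝ) × ℝ => x + p.2 • ((m + r • p.1) - x)))).measurable
    _ ≤ _ := by
        refine setLIntegral_mono' measurableSet_Ioc fun t ht => ?_
        have ht0 : 0 < t * r := mul_pos ht.1 hr
        have hcont : Continuous (fun w : Fin d → ℝ => ‖fderiv ℝ u (x + t • ((m + r • w) - x))‖ₑ) :=
          hfc.comp (by fun_prop)
        rw [lintegral_const_mul _ hcont.measurable]
        have e : ∀ w : Fin d → ℝ, x + t • ((m + r • w) - x) = (x + t • (m - x)) + (t * r) • w := by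
          intro w; ext i; simp; ring
        simp_rw [e]
        rw [lint_scale (fun q => ‖fderiv ℝ u q‖ₑ) hfc.measurable _ _ ht0, ← mul_assoc, ← ENNReal.ofReal_mul hr.le]
        gcongr
        intro q hq
        rw [Metric.mem_closedBall] at hq ⊢
        have h1 := dist_triangle q (x + t • (m - x)) x
        have h2 : dist (x + t • (m - x)) x ≤ t * (r / 2) := by
          rw [dist_eq_norm]; simp only [add_sub_cancel_left, norm_smul, Real.norm_of_nonneg ht.1.le]
          exact mul_le_mul_of_nonneg_left hm ht.1.le
        linarith

lemma fullB {d : ℕ} (u : (Fin d → ℝ) → ℝ) (hu : ContDiff ℝ 1 u) (x y : Fin d → ℝ) :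
    ENNReal.ofReal |u x - u y| ≤
      (∫⁻ t in Ioc (0:ℝ) 1, ENNReal.ofReal (‖x - y‖ * ((t * ‖x - y‖) ^ d)⁻¹) *
        ∫⁻ q in Metric.closedBall x (t * ‖x - y‖), ‖fderiv ℝ u q‖ₑ) +
      ∫⁻ t in Ioc (0:ℝ) 1, ENNReal.ofReal (‖x - y‖ * ((t * ‖x - y‖) ^ d)⁻¹) *
        ∫⁻ q in Metric.closedBall y (t * ‖x - y‖), ‖fderiv ℝ u q‖ₑ := by
  by_cases hxy : x = y
  · simp [hxy]
  have hr : 0 < ‖x - y‖ := norm_pos_iff.2 (sub_ne_zero.2 hxy)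
  set m : Fin d → ℝ := (1/2 : ℝ) • (x + y) with hm
  have hmx : ‖m - x‖ ≤ ‖x - y‖ / 2 := by
    have : m - x = -((1/2 : ℝ) • (x - y)) := by ext i; simp [hm]; ring
    rw [this, norm_neg, norm_smul]; norm_num; linarith
  have hmy : ‖m - y‖ ≤ ‖x - y‖ / 2 := by
    have : m - y = ((1/2 : ℝ) • (x - y)) := by ext i; simp [hm]; ring
    rw [this, norm_smul]; norm_num; linarith
  refine le_trans ?_ (add_le_add (halfB u hu x m _ hr hmx) (halfB u hu y m _ hr hmy))
  have hcu := hu.continuous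
  rw [← lintegral_add_left (by fun_prop)]
  have hv : volume (Metric.closedBall (0 : Fin d → ℝ) (1/2)) = 1 := by
    rw [Real.volume_pi_closedBall _ (by norm_num)]; norm_num
  calc ENNReal.ofReal |u x - u y| = ∫⁻ w in Metric.closedBall (0 : Fin d → ℝ) (1/2), ENNReal.ofReal |u x - u y| := by
        rw [setLIntegral_const, hv, mul_one]
    _ ≤ _ := by
        refine lintegral_mono fun w => ?_
        rw [← ENNReal.ofReal_add (abs_nonneg _) (abs_nonneg _)]
        apply ENNReal.ofReal_le_ofReal
        rw [abs_sub_comm (u y)]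
        exact abs_sub_le _ _ _

lemma torus_vol {d : ℕ} : volume (Tcube d) = 1 := by
  simp [Tcube, Real.volume_pi_Ico]

lemma tcube_meas {d : ℕ} : MeasurableSet (Tcube d) :=
  MeasurableSet.univ_pi fun _ => measurableSet_Ico

instance torus_prob {d : ℕ} : IsProbabilityMeasure (torusMeasure d) :=
  ⟨by simp [torusMeasure, torus_vol]⟩

lemma exists_rep {d : ℕ} (x : Fin d → ℝ) : ∃ k : Fin d → ℤ, x + latVec k ∈ Tcube d := by
  refine ⟨fun i => -⌊x i⌋, fun i _ => ?_⟩
  simp only [latVec, Pi.add_apply, Int.cast_neg]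
  exact ⟨by linarith [Int.floor_le (x i)], by linarith [Int.lt_floor_add_one (x i)]⟩

lemma per_bdd {d : ℕ} {E : Type*} [NormedAddCommGroup E] (f : (Fin d → ℝ) → E) (hf : Continuous f)
    (hp : ZPeriodic f) : ∃ B : ℝ, 0 ≤ B ∧ ∀ x, ‖f x‖ ≤ B := by
  obtain ⟨B, hB⟩ := (isCompact_Icc (a := (0 : Fin d → ℝ)) (b := 1)).exists_bound_of_continuousOn hf.continuousOn
  refine ⟨max B 0, le_max_right _ _, fun x => ?_⟩
  obtain ⟨k, hk⟩ := exists_rep x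
  rw [← hp x k]
  exact (hB _ ⟨fun i => (hk i trivial).1, fun i => (hk i trivial).2.le⟩).trans (le_max_left _ _)

lemma per_int {d : ℕ} (f : (Fin d → ℝ) → ℝ) (hf : Continuous f)
    (hp : ZPeriodic f) : Integrable f (torusMeasure d) := by
  obtain ⟨B, _, hB⟩ := per_bdd f hf hp
  exact Integrable.of_bound hf.aestronglyMeasurable B (Filter.Eventually.of_forall hB)

lemma per_fderiv {d : ℕ} (f : (Fin d → ℝ) → ℝ) (hp : ZPeriodic f) : ZPeriodic (fderiv ℝ f) := by
  intro x k
  rw [← fderiv_comp_add_right]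
  congr 1
  ext y; exact hp y k

lemma per_comp {d : ℕ} {α β : Type*} (f : (Fin d → ℝ) → α) (hp : ZPeriodic f) (g : α → β) :
    ZPeriodic (fun x => g (f x)) := fun x k => by simp only [hp x k]

lemma per_comp2 {d : ℕ} {α β γ : Type*} {f : (Fin d → ℝ) → α} {f' : (Fin d → ℝ) → β} (hp : ZPeriodic f)
    (hp' : ZPeriodic f') (g : α → β → γ) :
    ZPeriodic (fun x => g (f x) (f' x)) := fun x k => by simp only [hp x k, hp' x k]

lemma per_grad {d : ℕ} (f : (Fin d → ℝ) → ℝ) (hp : ZPeriodic f) : ZPeriodic (grad f) :=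
  per_comp _ (per_fderiv f hp) (fun L => fun i => L (Pi.single i 1))

lemma cont_grad {d : ℕ} (f : (Fin d → ℝ) → ℝ) (hf : ContDiff ℝ 1 f) (i : Fin d) :
    Continuous (fun x => grad f x i) := by
  have := hf.continuous_fderiv one_ne_zero
  unfold grad; fun_prop

lemma int_deriv_zero {n : ℕ} (g : (Fin (n+1) → ℝ) → ℝ) (hg : ContDiff ℝ 1 g) (hp : ZPeriodic g)
    (i : Fin (n+1)) : ∫ x, grad g x i ∂(torusMeasure (n+1)) = 0 := by
  have hae : Tcube (n+1) =ᵐ[volume] Icc (0 : Fin (n+1) → ℝ) 1 := by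
    have := Measure.univ_pi_Ico_ae_eq_Icc (μ := fun _ : Fin (n+1) => (volume : Measure ℝ)) (f := fun _ => (0:ℝ)) (g := fun _ => (1:ℝ))
    exact this
  unfold torusMeasure
  rw [setIntegral_congr_set hae]
  have hcont := cont_grad g hg i
  have key := integral_divergence_of_hasFDerivAt_off_countable' (0 : Fin (n+1) → ℝ) 1 zero_le_one
    (fun j x => if j = i then g x else 0) (fun j x => if j = i then fderiv ℝ g x else 0) ∅ countable_empty
    (fun j => by
      by_cases h : j = i
      · simp only [h, if_true]; exact hg.continuous.continuousOn
      · simp only [h, if_false]; exact continuousOn_const)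
    (fun x _ j => by
      by_cases h : j = i
      · simp only [h, if_true]; exact (hg.differentiable one_ne_zero x).hasFDerivAt
      · simp only [h, if_false]; exact hasFDerivAt_const _ _)
  have hs : ∀ x, ∑ j, (if j = i then fderiv ℝ g x else 0) (Pi.single j 1) = grad g x i := by
    intro x
    rw [Finset.sum_eq_single i]
    · simp [grad]
    · intro j _ h; simp [h]
    · simp
  simp only [hs] at key
  rw [key (hcont.continuousOn.integrableOn_compact isCompact_Icc)]
  apply Finset.sum_eq_zero
  intro j _
  by_cases h : j = i
  · subst h
    simp only [if_true]
    rw [sub_eq_zero]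
    congr 1; ext x
    rw [← hp (j.insertNth ((0 : Fin (n+1) → ℝ) j) x) (Pi.single j 1)]
    congr 1; ext l
    refine Fin.succAboveCases j ?_ (fun l => ?_) l
    · simp [latVec]
    · simp [latVec, Fin.succAbove_ne]
  · simp [h]

lemma green {n : ℕ} (w φ : (Fin (n+1) → ℝ) → ℝ) (hw : ContDiff ℝ 2 w) (hwp : ZPeriodic w)
    (hφ : ContDiff ℝ 1 φ) (hφp : ZPeriodic φ) :
    ∫ x, dotP (grad w x) (grad φ x) ∂(torusMeasure (n+1)) = - ∫ x, lap w x * φ x ∂(torusMeasure (n+1)) := by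
  have hw1 : ∀ i, ContDiff ℝ 1 (fun x => grad w x i) := by
    intro i
    have : ContDiff ℝ 1 (fderiv ℝ w) := hw.fderiv_right (by norm_num)
    exact this.clm_apply contDiff_const
  have hwp1 : ∀ i, ZPeriodic (fun x => grad w x i) := fun i => per_comp _ (per_grad w hwp) (fun v => v i)
  have h0 : ∀ i, ∫ x, (grad w x i * grad φ x i + grad (fun x => grad w x i) x i * φ x) ∂(torusMeasure (n+1)) = 0 := by
    intro i
    rw [← int_deriv_zero (fun x => grad w x i * φ x) ((hw1 i).mul hφ) (per_comp2 (hwp1 i) hφp (· * ·)) i]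
    congr 1; ext x
    simp only [grad]
    have hm : fderiv ℝ (fun x => (fderiv ℝ w x) (Pi.single i 1) * φ x) x =
        ((fderiv ℝ w x) (Pi.single i 1)) • fderiv ℝ φ x +
          φ x • fderiv ℝ (fun x => (fderiv ℝ w x) (Pi.single i 1)) x :=
      fderiv_mul ((hw1 i).differentiable one_ne_zero x) (hφ.differentiable one_ne_zero x)
    rw [hm]
    simp; ring
  have hi1 : ∀ i, Integrable (fun x => grad w x i * grad φ x i) (torusMeasure (n+1)) := fun i =>
    per_int _ ((hw1 i).continuous.mul (cont_grad φ hφ i)) (per_comp2 (per_grad w hwp) (per_grad φ hφp) (fun a b => a i * b i))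
  have hi2 : ∀ i, Integrable (fun x => grad (fun x => grad w x i) x i * φ x) (torusMeasure (n+1)) := fun i =>
    per_int _ ((cont_grad _ (hw1 i) i).mul hφ.continuous) (per_comp2 (per_grad _ (hwp1 i)) hφp (fun a b => a i * b))
  have e1 : ∫ x, dotP (grad w x) (grad φ x) ∂(torusMeasure (n+1)) = ∑ i, ∫ x, grad w x i * grad φ x i ∂(torusMeasure (n+1)) := by
    simp only [dotP]; rw [integral_finsetSum _ fun i _ => hi1 i]
  have e2 : ∫ x, lap w x * φ x ∂(torusMeasure (n+1)) = ∑ i, ∫ x, grad (fun x => grad w x i) x i * φ x ∂(torusMeasure (n+1)) := by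
    rw [← integral_finsetSum _ fun i _ => hi2 i]
    congr 1; ext x; simp only [lap, grad, Finset.sum_mul]
  rw [e1, e2, eq_neg_iff_add_eq_zero, ← Finset.sum_add_distrib]
  apply Finset.sum_eq_zero
  intro i _
  rw [← h0 i, integral_add (hi1 i) (hi2 i)]

lemma weak_ext {d : ℕ} (ε : ℝ) (U g φ : (Fin d → ℝ) → ℝ) (hU : ContDiff ℝ 1 U) (hUp : ZPeriodic U)
    (hg : Integrable g (torusMeasure d)) (hW : IsWeakPoisson ε U g)
    (hφ : ContDiff ℝ 1 φ) (hφp : ZPeriodic φ) :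
    ε ^ 2 * ∫ x, dotP (grad U x) (grad φ x) ∂(torusMeasure d) = - ∫ x, g x * φ x ∂(torusMeasure d) := by
  let ρ : ℕ → ContDiffBump (0 : Fin d → ℝ) := fun n =>
    { rIn := 1 / ((n:ℝ) + 1) / 2, rOut := 1 / ((n:ℝ) + 1), rIn_pos := by positivity,
      rIn_lt_rOut := by
        have : 0 < 1 / ((n:ℝ) + 1) := by positivity
        linarith }
  have hρ : Filter.Tendsto (fun n => (ρ n).rOut) Filter.atTop (nhds 0) :=
    tendsto_one_div_add_atTop_nhds_zero_nat
  obtain ⟨B, hB0, hB⟩ := per_bdd φ hφ.continuous hφp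
  obtain ⟨B', hB'0, hB'⟩ := per_bdd (fderiv ℝ φ) (hφ.continuous_fderiv one_ne_zero) (per_fderiv φ hφp)
  obtain ⟨A, hA0, hA⟩ := per_bdd (fderiv ℝ U) (hU.continuous_fderiv one_ne_zero) (per_fderiv U hUp)
  let ψ : ℕ → (Fin d → ℝ) → ℝ := fun n => convolution ((ρ n).normed volume) φ (ContinuousLinearMap.lsmul ℝ ℝ) volume
  have hψdef : ∀ n x, ψ n x = ∫ t, (ρ n).normed volume t * φ (x - t) := fun n x => rfl
  have hbd : ∀ n (f : (Fin d → ℝ) → ℝ) (K : ℝ), Continuous f → (∀ x, ‖f x‖ ≤ K) → ∀ x, ‖∫ t, (ρ n).normed volume t * f (x - t)‖ ≤ K := by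
    intro n f K hf hK x
    calc _ ≤ ∫ t, (ρ n).normed volume t * K := by
          refine norm_integral_le_of_norm_le ((ρ n).integrable_normed.mul_const K) (Filter.Eventually.of_forall fun t => ?_)
          rw [norm_mul, Real.norm_of_nonneg ((ρ n).nonneg_normed t)]
          exact mul_le_mul_of_nonneg_left (hK _) ((ρ n).nonneg_normed t)
      _ = K := by rw [integral_mul_const, (ρ n).integral_normed, one_mul]
  have hψs : ∀ n, ContDiff ℝ (⊤ : ℕ∞) (ψ n) := fun n =>
    (ρ n).hasCompactSupport_normed.contDiff_convolution_left _ (ρ n).contDiff_normed hφ.continuous.locallyIntegrable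
  have hψp : ∀ n, ZPeriodic (ψ n) := by
    intro n x k
    rw [hψdef, hψdef]; congr 1; ext t
    rw [show x + latVec k - t = (x - t) + latVec k by abel, hφp]
  have hψg : ∀ n x i, grad (ψ n) x i = ∫ t, (ρ n).normed volume t * grad φ (x - t) i := by
    intro n x i
    have hD : HasFDerivAt (ψ n) (∫ t, (ρ n).normed volume t • fderiv ℝ φ (x - t)) x := by
      refine hasFDerivAt_integral_of_dominated_of_fderiv_le (𝕜 := ℝ) (F := fun x t => (ρ n).normed volume t * φ (x - t))
        (F' := fun x t => (ρ n).normed volume t • fderiv ℝ φ (x - t)) (bound := fun t => (ρ n).normed volume t * B') (s := univ) Filter.univ_mem ?_ ?_ ?_ ?_ ?_ ?_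
      · refine Filter.Eventually.of_forall fun y => ?_
        have h1 := (ρ n).continuous_normed (μ := volume)
        have h2 := hφ.continuous
        exact (by fun_prop : Continuous (fun t => (ρ n).normed volume t * φ (y - t))).aestronglyMeasurable
      · have h1 := (ρ n).continuous_normed (μ := volume)
        have h2 := hφ.continuous
        refine ((ρ n).integrable_normed (μ := volume)).mul_bdd (c := B) ?_ (Filter.Eventually.of_forall fun t => hB _)
        exact (by fun_prop : Continuous (fun t => φ (x - t))).aestronglyMeasurable
      · have h1 := (ρ n).continuous_normed (μ := volume)
        have h2 := hφ.continuous_fderiv one_ne_zero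
        exact (by fun_prop : Continuous (fun t => (ρ n).normed volume t • fderiv ℝ φ (x - t))).aestronglyMeasurable
      · refine Filter.Eventually.of_forall fun t y _ => ?_
        rw [norm_smul, Real.norm_of_nonneg ((ρ n).nonneg_normed t)]
        exact mul_le_mul_of_nonneg_left (hB' _) ((ρ n).nonneg_normed t)
      · exact ((ρ n).integrable_normed (μ := volume)).mul_const B'
      · refine Filter.Eventually.of_forall fun t y _ => ?_
        have h1 : HasFDerivAt (fun y => φ (y - t)) (fderiv ℝ φ (y - t)) y :=
          (hasFDerivAt_comp_sub t).2 (hφ.differentiable one_ne_zero _).hasFDerivAt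
        exact h1.const_mul _
    simp only [grad]
    rw [hD.fderiv, ContinuousLinearMap.integral_apply]
    · rfl
    · have h2 := hφ.continuous_fderiv one_ne_zero
      exact ((ρ n).integrable_normed (μ := volume)).smul_bdd B'
        (by fun_prop : Continuous (fun t => fderiv ℝ φ (x - t))).aestronglyMeasurable
        (Filter.Eventually.of_forall fun t => hB' _)
  have hgb : ∀ (f : (Fin d → ℝ) → ℝ) (K : ℝ), (∀ x, ‖fderiv ℝ f x‖ ≤ K) → ∀ x i, ‖grad f x i‖ ≤ K := by
    intro f K hf x i
    refine ((fderiv ℝ f x).le_opNorm _).trans ?_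
    rw [Pi.norm_single, norm_one, mul_one]; exact hf x
  have hlimR : Filter.Tendsto (fun n => ∫ x, g x * ψ n x ∂(torusMeasure d)) Filter.atTop (nhds (∫ x, g x * φ x ∂(torusMeasure d))) := by
    refine tendsto_integral_of_dominated_convergence (fun x => ‖g x‖ * B) ?_ (hg.norm.mul_const B) ?_ ?_
    · intro n
      exact hg.aestronglyMeasurable.mul (hψs n).continuous.aestronglyMeasurable
    · intro n
      refine Filter.Eventually.of_forall fun x => ?_
      rw [norm_mul]
      exact mul_le_mul_of_nonneg_left (hbd n φ B hφ.continuous hB x) (norm_nonneg _)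
    · refine Filter.Eventually.of_forall fun x => ?_
      exact (ContDiffBump.convolution_tendsto_right_of_continuous hρ hφ.continuous x).const_mul _
  have hlimL : Filter.Tendsto (fun n => ∫ x, dotP (grad U x) (grad (ψ n) x) ∂(torusMeasure d)) Filter.atTop (nhds (∫ x, dotP (grad U x) (grad φ x) ∂(torusMeasure d))) := by
    refine tendsto_integral_of_dominated_convergence (fun x => ∑ i : Fin d, A * B') ?_ (integrable_const _) ?_ ?_
    · intro n
      apply Continuous.aestronglyMeasurable
      unfold dotP
      exact continuous_finsetSum _ fun i _ => (cont_grad U hU i).mul (cont_grad _ ((hψs n).of_le (by exact_mod_cast le_top)) i)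
    · intro n
      refine Filter.Eventually.of_forall fun x => ?_
      unfold dotP
      refine (norm_sum_le _ _).trans (Finset.sum_le_sum fun i _ => ?_)
      rw [norm_mul]
      refine mul_le_mul (hgb U A hA x i) ?_ (norm_nonneg _) hA0
      rw [hψg]
      exact hbd n (fun x => grad φ x i) B' (cont_grad φ hφ i) (fun x => hgb φ B' hB' x i) x
    · refine Filter.Eventually.of_forall fun x => ?_
      unfold dotP
      refine tendsto_finsetSum _ fun i _ => Filter.Tendsto.const_mul _ ?_
      simp_rw [hψg]
      exact ContDiffBump.convolution_tendsto_right_of_continuous hρ (cont_grad φ hφ i) x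
  have h1 := hlimL.const_mul (ε ^ 2)
  have h2 := hlimR.neg
  refine tendsto_nhds_unique h1 (h2.congr fun n => ?_)
  exact (hW (ψ n) (hψs n) (hψp n)).symm

/-- minimal displacement -/
noncomputable def tdel {d : ℕ} (x y : Fin d → ℝ) : Fin d → ℝ :=
  fun i => (x i - y i) - ((round (x i - y i) : ℤ) : ℝ)

lemma tdel_meas {d : ℕ} : Measurable (fun z : (Fin d → ℝ) × (Fin d → ℝ) => tdel z.1 z.2) := by
  refine measurable_pi_lambda _ fun i => ?_
  have h : Measurable (fun z : (Fin d → ℝ) × (Fin d → ℝ) => z.1 i - z.2 i) := by fun_prop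
  have hr : Measurable (fun t : ℝ => ((round t : ℤ) : ℝ)) := by
    simp only [round_eq]
    exact (measurable_from_top (f := fun n : ℤ => (n : ℝ))).comp
      (Int.measurable_floor.comp (measurable_id.add_const _))
  exact h.sub (hr.comp h)

lemma tdel_le {d : ℕ} (x y : Fin d → ℝ) : ‖tdel x y‖ ≤ 1 / 2 := by
  refine (pi_norm_le_iff_of_nonneg (by norm_num)).2 fun i => ?_
  exact abs_sub_round _

lemma tdel_eq {d : ℕ} (x y : Fin d → ℝ) :
    x - tdel x y = y + latVec (fun i => round (x i - y i)) := by
  ext i; simp [tdel, latVec]; ring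

lemma euclNorm_nonneg {d : ℕ} (v : Fin d → ℝ) : 0 ≤ euclNorm v := Real.sqrt_nonneg _

lemma abs_le_euclNorm {d : ℕ} (v : Fin d → ℝ) (i : Fin d) : |v i| ≤ euclNorm v := by
  unfold euclNorm
  rw [← Real.sqrt_sq_eq_abs]
  apply Real.sqrt_le_sqrt
  exact Finset.single_le_sum (f := fun i => v i ^ 2) (fun j _ => sq_nonneg _) (Finset.mem_univ i)

lemma tdist_eq {d : ℕ} (x y : Fin d → ℝ) : tdist x y = euclNorm (tdel x y) := by
  apply le_antisymm
  · have hb : BddBelow (Set.range fun k : Fin d → ℤ => euclNorm (x - y + latVec k)) :=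
      ⟨0, by rintro _ ⟨k, rfl⟩; exact euclNorm_nonneg _⟩
    refine (ciInf_le hb (fun i => - round (x i - y i))).trans (le_of_eq ?_)
    congr 1; ext i; simp [tdel, latVec]; ring
  · refine le_ciInf fun k => ?_
    unfold euclNorm
    apply Real.sqrt_le_sqrt
    refine Finset.sum_le_sum fun i _ => ?_
    rw [sq_le_sq]
    have := round_le (x i - y i) (- k i)
    simpa [tdel, latVec] using this

lemma tdel_le_tdist {d : ℕ} (x y : Fin d → ℝ) : ‖tdel x y‖ ≤ tdist x y := by
  rw [tdist_eq]
  exact (pi_norm_le_iff_of_nonneg (euclNorm_nonneg _)).2 fun i => abs_le_euclNorm _ i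

lemma tdist_sq_int {d : ℕ} (κ : Measure ((Fin d → ℝ) × (Fin d → ℝ))) [IsFiniteMeasure κ] :
    Integrable (fun z => tdist z.1 z.2 ^ (2:ℝ)) κ := by
  have e : (fun z : (Fin d → ℝ) × (Fin d → ℝ) => tdist z.1 z.2 ^ (2:ℝ)) =
      fun z => ∑ i, (tdel z.1 z.2 i) ^ 2 := by
    ext z
    rw [tdist_eq, Real.rpow_two, euclNorm, Real.sq_sqrt (Finset.sum_nonneg fun i _ => sq_nonneg _)]
  rw [e]
  have hm : ∀ i, Measurable (fun z : (Fin d → ℝ) × (Fin d → ℝ) => tdel z.1 z.2 i) :=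
    fun i => (measurable_pi_apply i).comp tdel_meas
  refine integrable_finsetSum _ fun i _ => ?_
  refine Integrable.of_bound ((hm i).pow_const 2).aestronglyMeasurable ((1/2:ℝ)^2) (Filter.Eventually.of_forall fun z => ?_)
  rw [norm_pow]
  exact pow_le_pow_left₀ (norm_nonneg _) ((norm_le_pi_norm _ i).trans (tdel_le _ _)) 2

/-- the enlarged cube -/
def Rcube (d : ℕ) : Set (Fin d → ℝ) := Set.univ.pi fun _ => Set.Ico (-1:ℝ) 2

lemma rcube_meas {d : ℕ} : MeasurableSet (Rcube d) :=
  MeasurableSet.univ_pi fun _ => measurableSet_Ico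

lemma ball_sub_rcube {d : ℕ} {x : Fin d → ℝ} (hx : x ∈ Tcube d) {ρ : ℝ} (h : ρ ≤ 1 / 2) :
    Metric.closedBall x ρ ⊆ Rcube d := by
  intro q hq i _
  have h1 : |q i - x i| ≤ 1 / 2 := by
    rw [Metric.mem_closedBall] at hq
    exact (dist_le_pi_dist q x i).trans (hq.trans h)
  have h2 := hx i trivial
  have := abs_le.1 h1
  exact ⟨by linarith [h2.1], by linarith [h2.2]⟩

lemma cover_int {d : ℕ} (f : (Fin d → ℝ) → ℝ≥0∞) (hp : ZPeriodic f) :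
    ∫⁻ q in Rcube d, f q ≤ 3 ^ d * ∫⁻ q in Tcube d, f q := by
  let S : (Fin d → Fin 3) → Set (Fin d → ℝ) := fun k => {q | q - latVec (fun i => ((k i : ℕ) : ℤ) - 1) ∈ Tcube d}
  have hsub : Rcube d ⊆ ⋃ k, S k := by
    intro q hq
    have hfl : ∀ i, ∃ m : Fin 3, ⌊q i⌋ = ((m : ℕ) : ℤ) - 1 := by
      intro i
      have h := hq i trivial
      have h1 : -1 ≤ ⌊q i⌋ := Int.le_floor.2 (by push_cast; exact h.1)
      have h2 : ⌊q i⌋ < 2 := Int.floor_lt.2 (by push_cast; exact h.2)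
      refine ⟨⟨(⌊q i⌋ + 1).toNat, by omega⟩, ?_⟩
      simp only []
      omega
    choose k hk using hfl
    refine mem_iUnion.2 ⟨k, fun i _ => ?_⟩
    simp only [latVec, Pi.sub_apply, ← hk]
    exact ⟨by linarith [Int.floor_le (q i)], by linarith [Int.lt_floor_add_one (q i)]⟩
  have htr : ∀ k, ∫⁻ q in S k, f q = ∫⁻ q in Tcube d, f q := by
    intro k
    have hSm : MeasurableSet (S k) := tcube_meas.preimage (measurable_id.sub_const _)
    rw [← lintegral_indicator hSm, ← lintegral_indicator tcube_meas]
    rw [← lintegral_sub_right_eq_self ((Tcube d).indicator f) (latVec (fun i => ((k i : ℕ) : ℤ) - 1))]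
    congr 1; ext q
    simp only [indicator]
    have : f (q - latVec (fun i => ((k i : ℕ) : ℤ) - 1)) = f q := by
      rw [← hp (q - latVec (fun i => ((k i : ℕ) : ℤ) - 1)) (fun i => ((k i : ℕ) : ℤ) - 1), sub_add_cancel]
    rw [this]; rfl
  calc ∫⁻ q in Rcube d, f q ≤ ∫⁻ q in ⋃ k, S k, f q := lintegral_mono_set hsub
    _ ≤ ∑' k, ∫⁻ q in S k, f q := lintegral_iUnion_le _ _
    _ = 3 ^ d * ∫⁻ q in Tcube d, f q := by
      simp only [htr, tsum_fintype, Finset.sum_const, Finset.card_univ, nsmul_eq_mul]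
      simp

lemma ball_trans {d : ℕ} (f : (Fin d → ℝ) → ℝ≥0∞) (hp : ZPeriodic f) (y : Fin d → ℝ) (k : Fin d → ℤ) (ρ : ℝ) :
    ∫⁻ q in Metric.closedBall (y + latVec k) ρ, f q = ∫⁻ q in Metric.closedBall y ρ, f q := by
  rw [← lintegral_indicator Metric.isClosed_closedBall.measurableSet, ← lintegral_indicator Metric.isClosed_closedBall.measurableSet]
  rw [← lintegral_add_right_eq_self _ (latVec k)]
  congr 1; ext q
  simp only [indicator, Metric.mem_closedBall, dist_add_right, hp q k]

lemma dens_ball {d : ℕ} (h : (Fin d → ℝ) → ℝ) (hh : MemLp h ⊤ (torusMeasure d)) (M : ℝ)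
    (hM : LpNorm ⊤ h ≤ M) (x : Fin d → ℝ) (ρ : ℝ) :
    densMeasure h (Metric.closedBall x ρ) ≤ ENNReal.ofReal M * volume (Metric.closedBall x ρ) := by
  have hB : MeasurableSet (Metric.closedBall x ρ) := Metric.isClosed_closedBall.measurableSet
  rw [densMeasure, withDensity_apply _ hB]
  have hle : ∀ᵐ q ∂(torusMeasure d), ENNReal.ofReal (h q) ≤ ENNReal.ofReal M := by
    filter_upwards [ae_le_eLpNormEssSup (f := h) (μ := torusMeasure d)] with q hq
    refine (Real.ofReal_le_enorm (h q)).trans (hq.trans ?_)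
    rw [← eLpNorm_exponent_top, ← ENNReal.ofReal_toReal hh.eLpNorm_ne_top]
    exact ENNReal.ofReal_le_ofReal hM
  calc ∫⁻ q in Metric.closedBall x ρ, ENNReal.ofReal (h q) ∂(torusMeasure d)
      ≤ ∫⁻ q in Metric.closedBall x ρ, ENNReal.ofReal M ∂(torusMeasure d) :=
        lintegral_mono_ae (ae_restrict_of_ae hle)
    _ = ENNReal.ofReal M * torusMeasure d (Metric.closedBall x ρ) := by simp
    _ ≤ _ := by gcongr; exact Measure.restrict_le_self

lemma meas_ballint {d : ℕ} {W : Type*} [MeasurableSpace W] (X : W → Fin d → ℝ) (hX : Measurable X)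
    (ρ : W → ℝ) (hρ : Measurable ρ) (F : (Fin d → ℝ) → ℝ≥0∞) (hF : Measurable F) :
    Measurable (fun w => ∫⁻ q in Metric.closedBall (X w) (ρ w), F q) := by
  have e : ∀ w, ∫⁻ q in Metric.closedBall (X w) (ρ w), F q =
      ∫⁻ q, ({p : W × (Fin d → ℝ) | p.2 ∈ Metric.closedBall (X p.1) (ρ p.1)}).indicator (fun p => F p.2) (w, q) := by
    intro w
    rw [← lintegral_indicator Metric.isClosed_closedBall.measurableSet]
    rfl
  simp only [e]
  exact Measurable.lintegral_prod_right' ((hF.comp measurable_snd).indicator (meas_ballset X hX ρ hρ))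

lemma swapA {d : ℕ} {Z : Type*} [MeasurableSpace Z] (κ : Measure Z) [SFinite κ]
    (X : Z → Fin d → ℝ) (hX : Measurable X) (r : Z → ℝ) (hr : Measurable r) (hr0 : ∀ z, 0 ≤ r z)
    (H : ℝ≥0∞)
    (hH : ∀ x ρ, κ (X ⁻¹' Metric.closedBall x ρ) ≤ H * volume (Metric.closedBall x ρ))
    (F : (Fin d → ℝ) → ℝ≥0∞) (hF : Measurable F) :
    Measurable (fun z => ∫⁻ t in Ioc (0:ℝ) 1, ENNReal.ofReal (r z * ((t * r z) ^ d)⁻¹) *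
        (∫⁻ q in Metric.closedBall (X z) (t * r z), F q)) ∧
    ∫⁻ z, (∫⁻ t in Ioc (0:ℝ) 1, ENNReal.ofReal (r z * ((t * r z) ^ d)⁻¹) *
        (∫⁻ q in Metric.closedBall (X z) (t * r z), F q)) ∂κ ≤
      (2 * 8 ^ d * H * ∫⁻ z, ENNReal.ofReal (r z ^ 2) ∂κ) ^ (1 / 2 : ℝ) *
        (∫⁻ q, F q ^ (2:ℝ)) ^ (1 / 2 : ℝ) := by
  have hm : Measurable (fun p : Z × ℝ => ENNReal.ofReal (r p.1 * ((p.2 * r p.1) ^ d)⁻¹) *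
        (∫⁻ q in Metric.closedBall (X p.1) (p.2 * r p.1), F q)) := by
    have h1 : Measurable (fun p : Z × ℝ => r p.1) := hr.comp measurable_fst
    have h2 : Measurable (fun p : Z × ℝ => p.2 * r p.1) := measurable_snd.mul h1
    refine Measurable.mul ?_ (meas_ballint _ (hX.comp measurable_fst) _ h2 F hF)
    exact (h1.mul (h2.pow_const d).inv).ennreal_ofReal
  refine ⟨hm.lintegral_prod_right', ?_⟩
  rw [lintegral_lintegral_swap (f := fun z t => ENNReal.ofReal (r z * ((t * r z) ^ d)⁻¹) *
        (∫⁻ q in Metric.closedBall (X z) (t * r z), F q)) hm.aemeasurable]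
  calc _ ≤ ∫⁻ t in Ioc (0:ℝ) 1, (2 * 8 ^ d * H * ∫⁻ z, ENNReal.ofReal (r z ^ 2) ∂κ) ^ (1 / 2 : ℝ) *
        (∫⁻ q, F q ^ (2:ℝ)) ^ (1 / 2 : ℝ) := by
        refine setLIntegral_mono measurable_const fun t ht => ?_
        exact keyA κ X hX r hr hr0 H hH t ht.1 F hF
    _ = _ := by simp

lemma dens_ae {d : ℕ} {Z : Type*} [MeasurableSpace Z] (κ : Measure Z) (X : Z → Fin d → ℝ) (hX : Measurable X)
    (h : (Fin d → ℝ) → ℝ) (hκ : κ.map X = densMeasure h) : ∀ᵐ z ∂κ, X z ∈ Tcube d := by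
  refine ae_of_ae_map (p := fun y => y ∈ Tcube d) hX.aemeasurable ?_
  rw [hκ]
  have h1 : ∀ᵐ y ∂(torusMeasure d), y ∈ Tcube d := ae_restrict_mem tcube_meas
  exact (withDensity_absolutelyContinuous _ _).ae_le h1

lemma cpl_est {d : ℕ} (u : (Fin d → ℝ) → ℝ) (hu : ContDiff ℝ 1 u) (hup : ZPeriodic u)
    (h₁ h₂ : (Fin d → ℝ) → ℝ) (hh₁ : MemLp h₁ ⊤ (torusMeasure d)) (hh₂ : MemLp h₂ ⊤ (torusMeasure d))
    (M : ℝ) (hM₁ : LpNorm ⊤ h₁ ≤ M) (hM₂ : LpNorm ⊤ h₂ ≤ M)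
    (κ : Measure ((Fin d → ℝ) × (Fin d → ℝ))) [IsProbabilityMeasure κ]
    (hκ : IsCoupling κ (densMeasure h₁) (densMeasure h₂)) :
    ∫⁻ z, ENNReal.ofReal |u z.1 - u z.2| ∂κ ≤
      2 * ((2 * 8 ^ d * ENNReal.ofReal M * ∫⁻ z, ENNReal.ofReal (‖tdel z.1 z.2‖ ^ 2) ∂κ) ^ (1 / 2 : ℝ) *
        (3 ^ d * ∫⁻ q, ‖fderiv ℝ u q‖ₑ ^ (2:ℝ) ∂(torusMeasure d)) ^ (1 / 2 : ℝ)) := by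
  set f : (Fin d → ℝ) → ℝ≥0∞ := fun q => ‖fderiv ℝ u q‖ₑ with hf
  have hfm : Measurable f := (hu.continuous_fderiv one_ne_zero).measurable.enorm
  have hfp : ZPeriodic f := per_comp _ (per_fderiv u hup) (fun L => ‖L‖ₑ)
  set F : (Fin d → ℝ) → ℝ≥0∞ := (Rcube d).indicator f with hF
  have hFm : Measurable F := hfm.indicator rcube_meas
  set r : (Fin d → ℝ) × (Fin d → ℝ) → ℝ := fun z => ‖tdel z.1 z.2‖ with hr
  have hrm : Measurable r := tdel_meas.norm
  have hr0 : ∀ z, 0 ≤ r z := fun z => norm_nonneg _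
  have hFF : ∫⁻ q, F q ^ (2:ℝ) ≤ 3 ^ d * ∫⁻ q, f q ^ (2:ℝ) ∂(torusMeasure d) := by
    have e : ∀ q, F q ^ (2:ℝ) = (Rcube d).indicator (fun q => f q ^ (2:ℝ)) q := by
      intro q
      by_cases hq : q ∈ Rcube d <;> simp [hF, hq]
    simp only [e]
    rw [lintegral_indicator rcube_meas]
    exact cover_int _ (per_comp _ hfp (fun a => a ^ (2:ℝ)))
  have hball : ∀ x ∈ Tcube d, ∀ ρ ≤ (1/2:ℝ), ∫⁻ q in Metric.closedBall x ρ, f q = ∫⁻ q in Metric.closedBall x ρ, F q := by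
    intro x hx ρ hρ
    refine setLIntegral_congr_fun Metric.isClosed_closedBall.measurableSet fun q hq => ?_
    simp [hF, ball_sub_rcube hx hρ hq]
  have hH₁ : ∀ x ρ, κ (Prod.fst ⁻¹' Metric.closedBall x ρ) ≤ ENNReal.ofReal M * volume (Metric.closedBall x ρ) := by
    intro x ρ
    rw [← Measure.map_apply measurable_fst Metric.isClosed_closedBall.measurableSet, hκ.1]
    exact dens_ball h₁ hh₁ M hM₁ x ρ
  have hH₂ : ∀ x ρ, κ (Prod.snd ⁻¹' Metric.closedBall x ρ) ≤ ENNReal.ofReal M * volume (Metric.closedBall x ρ) := by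
    intro x ρ
    rw [← Measure.map_apply measurable_snd Metric.isClosed_closedBall.measurableSet, hκ.2]
    exact dens_ball h₂ hh₂ M hM₂ x ρ
  have S₁ := swapA κ Prod.fst measurable_fst r hrm hr0 _ hH₁ F hFm
  have S₂ := swapA κ Prod.snd measurable_snd r hrm hr0 _ hH₂ F hFm
  have hpt : ∀ᵐ z ∂κ, ENNReal.ofReal |u z.1 - u z.2| ≤
      (∫⁻ t in Ioc (0:ℝ) 1, ENNReal.ofReal (r z * ((t * r z) ^ d)⁻¹) *
        (∫⁻ q in Metric.closedBall z.1 (t * r z), F q)) +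
      (∫⁻ t in Ioc (0:ℝ) 1, ENNReal.ofReal (r z * ((t * r z) ^ d)⁻¹) *
        (∫⁻ q in Metric.closedBall z.2 (t * r z), F q)) := by
    filter_upwards [dens_ae κ Prod.fst measurable_fst h₁ hκ.1, dens_ae κ Prod.snd measurable_snd h₂ hκ.2] with z hz1 hz2
    have hB := fullB u hu z.1 (z.1 - tdel z.1 z.2)
    have e1 : u (z.1 - tdel z.1 z.2) = u z.2 := by rw [tdel_eq, hup]
    rw [e1, sub_sub_cancel] at hB
    have hρ : ∀ t ∈ Ioc (0:ℝ) 1, t * r z ≤ 1 / 2 := by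
      intro t ht
      have := tdel_le z.1 z.2
      calc t * r z ≤ 1 * r z := mul_le_mul_of_nonneg_right ht.2 (hr0 z)
        _ ≤ 1 / 2 := by rw [one_mul]; exact this
    refine hB.trans (add_le_add (le_of_eq ?_) (le_of_eq ?_))
    · refine setLIntegral_congr_fun measurableSet_Ioc fun t ht => ?_
      have := hball z.1 hz1 _ (hρ t ht)
      simp only [hr, hf] at this ⊢
      rw [this]
    · refine setLIntegral_congr_fun measurableSet_Ioc fun t ht => ?_
      have h1 := hball z.2 hz2 _ (hρ t ht)
      have h2 := ball_trans f hfp z.2 (fun i => round (z.1 i - z.2 i)) (t * r z)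
      rw [← tdel_eq, h1] at h2
      simp only [hr, hf] at h2 ⊢
      rw [h2]
  calc _ ≤ _ := lintegral_mono_ae hpt
    _ = _ := lintegral_add_left S₁.1 _
    _ ≤ _ := add_le_add S₁.2 S₂.2
    _ = 2 * ((2 * 8 ^ d * ENNReal.ofReal M * ∫⁻ z, ENNReal.ofReal (r z ^ 2) ∂κ) ^ (1 / 2 : ℝ) *
        (∫⁻ q, F q ^ (2:ℝ)) ^ (1 / 2 : ℝ)) := (two_mul _).symm
    _ ≤ _ := by gcongr

lemma dens_prob {d : ℕ} (h : (Fin d → ℝ) → ℝ) (h0 : ∀ x, 0 ≤ h x) (h1 : ∫ x, h x ∂(torusMeasure d) = 1)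
    (hh : MemLp h ⊤ (torusMeasure d)) : IsProbabilityMeasure (densMeasure h) := by
  constructor
  rw [densMeasure, withDensity_apply _ MeasurableSet.univ, Measure.restrict_univ,
    ← ofReal_integral_eq_lintegral_ofReal (hh.integrable le_top) (Filter.Eventually.of_forall h0), h1]
  simp

lemma dens_int {d : ℕ} {Z : Type*} [MeasurableSpace Z] (κ : Measure Z) (X : Z → Fin d → ℝ) (hX : Measurable X)
    (h : (Fin d → ℝ) → ℝ) (hm : Measurable h) (h0 : ∀ x, 0 ≤ h x) (hκ : κ.map X = densMeasure h)
    (g : (Fin d → ℝ) → ℝ) (hg : Continuous g) :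
    ∫ z, g (X z) ∂κ = ∫ x, h x * g x ∂(torusMeasure d) := by
  rw [← integral_map hX.aemeasurable hg.aestronglyMeasurable, hκ, densMeasure,
    integral_withDensity_eq_integral_toReal_smul hm.ennreal_ofReal (Filter.Eventually.of_forall fun x => ENNReal.ofReal_lt_top)]
  congr 1; ext x
  rw [ENNReal.toReal_ofReal (h0 x), smul_eq_mul]

lemma fderiv_sq_le {d : ℕ} (u : (Fin d → ℝ) → ℝ) (q : Fin d → ℝ) :
    ‖fderiv ℝ u q‖ ^ 2 ≤ d * dotP (grad u q) (grad u q) := by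
  have h1 : ‖fderiv ℝ u q‖ ≤ ∑ i, |grad u q i| := by
    refine ContinuousLinearMap.opNorm_le_bound _ (Finset.sum_nonneg fun i _ => abs_nonneg _) fun v => ?_
    have e : fderiv ℝ u q v = ∑ i, v i * grad u q i := by
      conv_lhs => rw [← Finset.univ_sum_single v]
      rw [map_sum]
      refine Finset.sum_congr rfl fun i _ => ?_
      have : (Pi.single i (v i) : Fin d → ℝ) = v i • Pi.single i 1 := by
        rw [← Pi.single_smul]; simp
      rw [this, map_smul, smul_eq_mul, grad]
    rw [e, Finset.sum_mul]
    refine (norm_sum_le _ _).trans (Finset.sum_le_sum fun i _ => ?_)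
    rw [norm_mul, mul_comm]
    exact mul_le_mul_of_nonneg_left (norm_le_pi_norm v i) (abs_nonneg _)
  calc ‖fderiv ℝ u q‖ ^ 2 ≤ (∑ i, |grad u q i|) ^ 2 := pow_le_pow_left₀ (norm_nonneg _) h1 2
    _ ≤ (Finset.univ : Finset (Fin d)).card * ∑ i, |grad u q i| ^ 2 := sq_sum_le_card_mul_sum_sq
    _ = d * dotP (grad u q) (grad u q) := by
      simp [dotP, sq]

lemma cont_dot {d : ℕ} (u v : (Fin d → ℝ) → ℝ) (hu : ContDiff ℝ 1 u) (hv : ContDiff ℝ 1 v) :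
    Continuous (fun x => dotP (grad u x) (grad v x)) := by
  unfold dotP
  exact continuous_finsetSum _ fun i _ => (cont_grad u hu i).mul (cont_grad v hv i)

lemma int_dot {d : ℕ} (u v : (Fin d → ℝ) → ℝ) (hu : ContDiff ℝ 1 u) (hv : ContDiff ℝ 1 v)
    (hup : ZPeriodic u) (hvp : ZPeriodic v) :
    Integrable (fun x => dotP (grad u x) (grad v x)) (torusMeasure d) :=
  per_int _ (cont_dot u v hu hv) (per_comp2 (per_grad u hup) (per_grad v hvp) dotP)

lemma dotP_self_nonneg {d : ℕ} (v : Fin d → ℝ) : 0 ≤ dotP v v :=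
  Finset.sum_nonneg fun i _ => mul_self_nonneg _

lemma cpl_real {d : ℕ} (u : (Fin d → ℝ) → ℝ) (hu : ContDiff ℝ 1 u) (hup : ZPeriodic u)
    (h₁ h₂ : (Fin d → ℝ) → ℝ) (hh₁ : MemLp h₁ ⊤ (torusMeasure d)) (hh₂ : MemLp h₂ ⊤ (torusMeasure d))
    (M : ℝ) (hM₁ : LpNorm ⊤ h₁ ≤ M) (hM₂ : LpNorm ⊤ h₂ ≤ M) (hM0 : 0 ≤ M)
    (κ : Measure ((Fin d → ℝ) × (Fin d → ℝ))) [IsProbabilityMeasure κ]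
    (hκ : IsCoupling κ (densMeasure h₁) (densMeasure h₂)) :
    (∫ z, |u z.1 - u z.2| ∂κ) ^ 2 ≤
      (8 * 8 ^ d * 3 ^ d * d) * (M * ∫ z, tdist z.1 z.2 ^ (2:ℝ) ∂κ) *
        ∫ x, dotP (grad u x) (grad u x) ∂(torusMeasure d) := by
  have hest := cpl_est u hu hup h₁ h₂ hh₁ hh₂ M hM₁ hM₂ κ hκ
  set I := ∫ z, tdist z.1 z.2 ^ (2:ℝ) ∂κ with hI
  set E := ∫ x, dotP (grad u x) (grad u x) ∂(torusMeasure d) with hE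
  have htd0 : ∀ z : (Fin d → ℝ) × (Fin d → ℝ), 0 ≤ tdist z.1 z.2 := fun z => by
    rw [tdist_eq]; exact euclNorm_nonneg _
  have hI0 : 0 ≤ I := integral_nonneg fun z => Real.rpow_nonneg (htd0 z) _
  have hE0 : 0 ≤ E := integral_nonneg fun x => dotP_self_nonneg _
  have hA : ∫⁻ z, ENNReal.ofReal (‖tdel z.1 z.2‖ ^ 2) ∂κ ≤ ENNReal.ofReal I := by
    rw [hI, ofReal_integral_eq_lintegral_ofReal (tdist_sq_int κ) (Filter.Eventually.of_forall fun z => Real.rpow_nonneg (htd0 z) _)]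
    refine lintegral_mono fun z => ENNReal.ofReal_le_ofReal ?_
    rw [Real.rpow_two]
    exact pow_le_pow_left₀ (norm_nonneg _) (tdel_le_tdist _ _) 2
  have hB : ∫⁻ q, ‖fderiv ℝ u q‖ₑ ^ (2:ℝ) ∂(torusMeasure d) ≤ ENNReal.ofReal (d * E) := by
    rw [hE, ← integral_const_mul, ofReal_integral_eq_lintegral_ofReal ((int_dot u u hu hu hup hup).const_mul _)
      (Filter.Eventually.of_forall fun z => mul_nonneg (Nat.cast_nonneg _) (dotP_self_nonneg _))]
    refine lintegral_mono fun q => ?_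
    rw [← ofReal_norm, ENNReal.ofReal_rpow_of_nonneg (norm_nonneg _) (by norm_num), Real.rpow_two]
    exact ENNReal.ofReal_le_ofReal (fderiv_sq_le u q)
  obtain ⟨B, hB0, hBu⟩ := per_bdd u hu.continuous hup
  have hint : Integrable (fun z : (Fin d → ℝ) × (Fin d → ℝ) => |u z.1 - u z.2|) κ := by
    have hc := hu.continuous
    refine Integrable.of_bound (by fun_prop : Continuous (fun z : (Fin d → ℝ) × (Fin d → ℝ) => |u z.1 - u z.2|)).aestronglyMeasurable (B + B) (Filter.Eventually.of_forall fun z => ?_)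
    rw [norm_abs_eq_norm]
    exact (norm_sub_le _ _).trans (add_le_add (hBu _) (hBu _))
  have hfin : ENNReal.ofReal (∫ z, |u z.1 - u z.2| ∂κ) ≤
      ENNReal.ofReal (2 * ((2 * 8 ^ d * M * I) ^ (1/2:ℝ) * (3 ^ d * (d * E)) ^ (1/2:ℝ))) := by
    rw [ofReal_integral_eq_lintegral_ofReal hint (Filter.Eventually.of_forall fun z => abs_nonneg _)]
    refine hest.trans ?_
    have e1 : ENNReal.ofReal (2 * 8 ^ d * M * I) = 2 * 8 ^ d * ENNReal.ofReal M * ENNReal.ofReal I := by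
      rw [ENNReal.ofReal_mul (by positivity), ENNReal.ofReal_mul (by positivity), ENNReal.ofReal_mul (by positivity),
        ENNReal.ofReal_pow (by positivity)]
      simp
    have e2 : ENNReal.ofReal (3 ^ d * (d * E)) = 3 ^ d * ENNReal.ofReal (d * E) := by
      rw [ENNReal.ofReal_mul (by positivity), ENNReal.ofReal_pow (by positivity)]
      simp
    rw [ENNReal.ofReal_mul (by positivity), ENNReal.ofReal_mul (by positivity),
      ← ENNReal.ofReal_rpow_of_nonneg (by positivity) (by norm_num),
      ← ENNReal.ofReal_rpow_of_nonneg (by positivity) (by norm_num), e1, e2]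
    simp only [ENNReal.ofReal_ofNat]
    gcongr
  have hfin2 := (ENNReal.ofReal_le_ofReal_iff (by positivity)).1 hfin
  have h0 : 0 ≤ ∫ z, |u z.1 - u z.2| ∂κ := integral_nonneg fun z => abs_nonneg _
  refine (pow_le_pow_left₀ h0 hfin2 2).trans (le_of_eq ?_)
  rw [← Real.sqrt_eq_rpow, ← Real.sqrt_eq_rpow, mul_pow, mul_pow, Real.sq_sqrt (by positivity), Real.sq_sqrt (by positivity)]
  ring

lemma wass_est {d : ℕ} (ε : ℝ) (hε : 0 < ε) (h₁ h₂ U₁ U₂ : (Fin d → ℝ) → ℝ)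
    (hm₁ : Measurable h₁) (hm₂ : Measurable h₂) (h0₁ : ∀ x, 0 ≤ h₁ x) (h0₂ : ∀ x, 0 ≤ h₂ x)
    (hi₁ : ∫ x, h₁ x ∂(torusMeasure d) = 1) (hi₂ : ∫ x, h₂ x ∂(torusMeasure d) = 1)
    (hh₁ : MemLp h₁ ⊤ (torusMeasure d)) (hh₂ : MemLp h₂ ⊤ (torusMeasure d))
    (hU₁ : ContDiff ℝ 1 U₁) (hU₂ : ContDiff ℝ 1 U₂) (hp₁ : ZPeriodic U₁) (hp₂ : ZPeriodic U₂)
    (hw₁ : IsWeakPoisson ε U₁ (fun x => h₁ x - 1)) (hw₂ : IsWeakPoisson ε U₂ (fun x => h₂ x - 1)) :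
    ∫ x, dotP (grad (fun x => U₁ x - U₂ x) x) (grad (fun x => U₁ x - U₂ x) x) ∂(torusMeasure d) ≤
      (8 * 8 ^ d * 3 ^ d * d) / ε ^ 4 * max (LpNorm ⊤ h₁) (LpNorm ⊤ h₂) *
        WassPow 2 (densMeasure h₁) (densMeasure h₂) := by
  set u : (Fin d → ℝ) → ℝ := fun x => U₁ x - U₂ x with hu_def
  have hu : ContDiff ℝ 1 u := hU₁.sub hU₂
  have hup : ZPeriodic u := per_comp2 hp₁ hp₂ (fun a b => a - b)
  set E := ∫ x, dotP (grad u x) (grad u x) ∂(torusMeasure d) with hE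
  have hE0 : 0 ≤ E := integral_nonneg fun x => dotP_self_nonneg _
  set M := max (LpNorm ⊤ h₁) (LpNorm ⊤ h₂) with hM
  have hM0 : 0 ≤ M := le_max_of_le_left ENNReal.toReal_nonneg
  have hI₁ := hh₁.integrable le_top
  have hI₂ := hh₂.integrable le_top
  have W₁ := weak_ext ε U₁ (fun x => h₁ x - 1) u hU₁ hp₁ (hI₁.sub (integrable_const 1)) hw₁ hu hup
  have W₂ := weak_ext ε U₂ (fun x => h₂ x - 1) u hU₂ hp₂ (hI₂.sub (integrable_const 1)) hw₂ hu hup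
  obtain ⟨B, hB0, hBu⟩ := per_bdd u hu.continuous hup
  have hgu : ∀ x i, grad u x i = grad U₁ x i - grad U₂ x i := by
    intro x i
    simp only [grad, hu_def]
    rw [fderiv_fun_sub (hU₁.differentiable one_ne_zero x) (hU₂.differentiable one_ne_zero x)]
    rfl
  have eE : E = (∫ x, dotP (grad U₁ x) (grad u x) ∂(torusMeasure d)) - ∫ x, dotP (grad U₂ x) (grad u x) ∂(torusMeasure d) := by
    rw [← integral_sub (int_dot U₁ u hU₁ hu hp₁ hup) (int_dot U₂ u hU₂ hu hp₂ hup), hE]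
    refine integral_congr_ae (Filter.Eventually.of_forall fun x => ?_)
    simp only [dotP]
    rw [← Finset.sum_sub_distrib]
    refine Finset.sum_congr rfl fun i _ => ?_
    rw [hgu]; ring
  have hbm : ∀ h : (Fin d → ℝ) → ℝ, Integrable h (torusMeasure d) → Integrable (fun x => h x * u x) (torusMeasure d) := by
    intro h hh
    exact hh.mul_bdd (c := B) hu.continuous.aestronglyMeasurable (Filter.Eventually.of_forall hBu)
  have hsplit : ∀ h : (Fin d → ℝ) → ℝ, Integrable h (torusMeasure d) →
      ∫ x, (h x - 1) * u x ∂(torusMeasure d) = (∫ x, h x * u x ∂(torusMeasure d)) - ∫ x, u x ∂(torusMeasure d) := by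
    intro h hh
    rw [← integral_sub (hbm h hh) (per_int u hu.continuous hup)]
    congr 1; ext x; ring
  rw [hsplit h₁ hI₁] at W₁
  rw [hsplit h₂ hI₂] at W₂
  have key : ∀ κ : Measure ((Fin d → ℝ) × (Fin d → ℝ)), IsProbabilityMeasure κ →
      IsCoupling κ (densMeasure h₁) (densMeasure h₂) →
      ε ^ 4 * E ≤ (8 * 8 ^ d * 3 ^ d * d) * (M * ∫ z, tdist z.1 z.2 ^ (2:ℝ) ∂κ) := by
    intro κ hκp hκ
    have hc := cpl_real u hu hup h₁ h₂ hh₁ hh₂ M (le_max_left _ _) (le_max_right _ _) hM0 κ hκ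
    have d₁ := dens_int κ Prod.fst measurable_fst h₁ hm₁ h0₁ hκ.1 u hu.continuous
    have d₂ := dens_int κ Prod.snd measurable_snd h₂ hm₂ h0₂ hκ.2 u hu.continuous
    have hcu := hu.continuous
    have i₁ : Integrable (fun z : (Fin d → ℝ) × (Fin d → ℝ) => u z.1) κ :=
      Integrable.of_bound (by fun_prop : Continuous (fun z : (Fin d → ℝ) × (Fin d → ℝ) => u z.1)).aestronglyMeasurable B
        (Filter.Eventually.of_forall fun z => hBu _)
    have i₂ : Integrable (fun z : (Fin d → ℝ) × (Fin d → ℝ) => u z.2) κ :=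
      Integrable.of_bound (by fun_prop : Continuous (fun z : (Fin d → ℝ) × (Fin d → ℝ) => u z.2)).aestronglyMeasurable B
        (Filter.Eventually.of_forall fun z => hBu _)
    have hle : ε ^ 2 * E ≤ ∫ z, |u z.1 - u z.2| ∂κ := by
      have : ε ^ 2 * E = - ∫ z, (u z.1 - u z.2) ∂κ := by
        rw [integral_sub i₁ i₂, d₁, d₂, eE, mul_sub, W₁, W₂]; ring
      rw [this]
      exact (neg_le_abs _).trans (abs_integral_le_integral_abs)
    set J := (8 * 8 ^ d * 3 ^ d * d) * (M * ∫ z, tdist z.1 z.2 ^ (2:ℝ) ∂κ) with hJ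
    have hJ0 : 0 ≤ J := by
      have : 0 ≤ ∫ z, tdist z.1 z.2 ^ (2:ℝ) ∂κ := integral_nonneg fun z =>
        Real.rpow_nonneg (by rw [tdist_eq]; exact euclNorm_nonneg _) _
      positivity
    have h2 : (ε ^ 2 * E) ^ 2 ≤ J * E := (pow_le_pow_left₀ (by positivity) hle 2).trans hc
    rcases hE0.eq_or_lt with h | h
    · rw [← h, mul_zero]; exact hJ0
    · refine le_of_mul_le_mul_right ?_ h
      calc ε ^ 4 * E * E = (ε ^ 2 * E) ^ 2 := by ring
        _ ≤ _ := h2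
  have hp1 := dens_prob h₁ h0₁ hi₁ hh₁
  have hp2 := dens_prob h₂ h0₂ hi₂ hh₂
  set K : ℝ := (8 * 8 ^ d * 3 ^ d * d) / ε ^ 4 * M with hK
  have hK0 : 0 ≤ K := by positivity
  have key2 : ∀ κ : Measure ((Fin d → ℝ) × (Fin d → ℝ)), IsProbabilityMeasure κ →
      IsCoupling κ (densMeasure h₁) (densMeasure h₂) → E ≤ K * ∫ z, tdist z.1 z.2 ^ (2:ℝ) ∂κ := by
    intro κ h1 h2
    have := key κ h1 h2
    rw [hK, div_mul_eq_mul_div, div_mul_eq_mul_div, le_div_iff₀ (by positivity)]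
    linarith
  have hprod : IsCoupling ((densMeasure h₁).prod (densMeasure h₂)) (densMeasure h₁) (densMeasure h₂) := by
    constructor
    · rw [Measure.map_fst_prod]; simp
    · rw [Measure.map_snd_prod]; simp
  rcases hK0.eq_or_lt with h | h
  · have := key2 _ inferInstance hprod
    rw [← h, zero_mul] at this ⊢
    exact this
  · rw [← div_le_iff₀' h]
    refine le_csInf ⟨_, _, inferInstance, hprod, rfl⟩ ?_
    rintro c ⟨κ, hκ1, hκ2, rfl⟩
    rw [div_le_iff₀' h]
    exact key2 κ hκ1 hκ2

lemma grad_fsub {d : ℕ} (U V : (Fin d → ℝ) → ℝ) (hU : ContDiff ℝ 1 U) (hV : ContDiff ℝ 1 V) (x : Fin d → ℝ) :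
    grad (fun x => U x - V x) x = grad U x - grad V x := by
  ext i
  simp only [grad, Pi.sub_apply]
  rw [fderiv_fun_sub (hU.differentiable one_ne_zero x) (hV.differentiable one_ne_zero x)]
  rfl

lemma lap_fsub {d : ℕ} (U V : (Fin d → ℝ) → ℝ) (hU : ContDiff ℝ 2 U) (hV : ContDiff ℝ 2 V) (x : Fin d → ℝ) :
    lap (fun x => U x - V x) x = lap U x - lap V x := by
  have hU1 : ContDiff ℝ 1 U := hU.of_le (by norm_num)
  have hV1 : ContDiff ℝ 1 V := hV.of_le (by norm_num)
  have hd : ∀ W : (Fin d → ℝ) → ℝ, ContDiff ℝ 2 W → ∀ i, Differentiable ℝ (fun y => fderiv ℝ W y (Pi.single i 1)) := by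
    intro W hW i
    have : ContDiff ℝ 1 (fderiv ℝ W) := hW.fderiv_right (by norm_num)
    exact (this.clm_apply contDiff_const).differentiable one_ne_zero
  simp only [lap]
  rw [← Finset.sum_sub_distrib]
  refine Finset.sum_congr rfl fun i _ => ?_
  have e : (fun y => fderiv ℝ (fun x => U x - V x) y (Pi.single i 1)) =
      fun y => fderiv ℝ U y (Pi.single i 1) - fderiv ℝ V y (Pi.single i 1) := by
    ext y
    exact congrFun (grad_fsub U V hU1 hV1 y) i
  rw [e, fderiv_fun_sub (hd U hU i x) (hd V hV i x)]
  rfl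

lemma energy {n : ℕ} (ε : ℝ) (hε : 0 < ε) (B₁ B₂ V₁ V₂ : (Fin (n+1) → ℝ) → ℝ)
    (hB₁ : ContDiff ℝ 1 B₁) (hB₂ : ContDiff ℝ 1 B₂) (pB₁ : ZPeriodic B₁) (pB₂ : ZPeriodic B₂)
    (hV₁ : ContDiff ℝ 2 V₁) (hV₂ : ContDiff ℝ 2 V₂) (pV₁ : ZPeriodic V₁) (pV₂ : ZPeriodic V₂)
    (e₁ : ∀ x, ε ^ 2 * lap V₁ x = Real.exp (B₁ x + V₁ x) - 1)
    (e₂ : ∀ x, ε ^ 2 * lap V₂ x = Real.exp (B₂ x + V₂ x) - 1) :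
    ∫ x, dotP (grad (fun x => V₁ x - V₂ x) x) (grad (fun x => V₁ x - V₂ x) x) ∂(torusMeasure (n+1)) ≤
    ∫ x, dotP (grad (fun x => B₁ x - B₂ x) x) (grad (fun x => B₁ x - B₂ x) x) ∂(torusMeasure (n+1)) := by
  set u : (Fin (n+1) → ℝ) → ℝ := fun x => B₁ x - B₂ x with hu_def
  set w : (Fin (n+1) → ℝ) → ℝ := fun x => V₁ x - V₂ x with hw_def
  have hu : ContDiff ℝ 1 u := hB₁.sub hB₂
  have hup : ZPeriodic u := per_comp2 pB₁ pB₂ (fun a b => a - b)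
  have hw : ContDiff ℝ 2 w := hV₁.sub hV₂
  have hw1 : ContDiff ℝ 1 w := hw.of_le (by norm_num)
  have hwp : ZPeriodic w := per_comp2 pV₁ pV₂ (fun a b => a - b)
  set D : (Fin (n+1) → ℝ) → ℝ := fun x => Real.exp (B₁ x + V₁ x) - Real.exp (B₂ x + V₂ x) with hD
  have hlap : ∀ x, ε ^ 2 * lap w x = D x := by
    intro x
    rw [hw_def, lap_fsub V₁ V₂ hV₁ hV₂, mul_sub, e₁, e₂]
    simp only [hD]; ring
  have cD : Continuous D := by
    have h1 := hB₁.continuous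
    have h2 := hB₂.continuous
    have h3 := hV₁.continuous
    have h4 := hV₂.continuous
    fun_prop
  have pD : ZPeriodic D := by
    intro x k
    simp only [hD, pB₁ x k, pB₂ x k, pV₁ x k, pV₂ x k]
  have g : ∀ φ : (Fin (n+1) → ℝ) → ℝ, ContDiff ℝ 1 φ → ZPeriodic φ →
      ε ^ 2 * ∫ x, dotP (grad w x) (grad φ x) ∂(torusMeasure (n+1)) = - ∫ x, D x * φ x ∂(torusMeasure (n+1)) := by
    intro φ hφ hφp
    rw [green w φ hw hwp hφ hφp, mul_neg, ← integral_const_mul]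
    congr 2; ext x; rw [← mul_assoc, hlap]
  have gw := g w hw1 hwp
  have gu := g u hu hup
  have hDi : ∀ φ : (Fin (n+1) → ℝ) → ℝ, ContDiff ℝ 1 φ → ZPeriodic φ → Integrable (fun x => D x * φ x) (torusMeasure (n+1)) :=
    fun φ hφ hφp => per_int _ (cD.mul hφ.continuous) (per_comp2 pD hφp (fun a b => a * b))
  have hmono : 0 ≤ (∫ x, D x * u x ∂(torusMeasure (n+1))) + ∫ x, D x * w x ∂(torusMeasure (n+1)) := by
    rw [← integral_add (hDi u hu hup) (hDi w hw1 hwp)]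
    refine integral_nonneg fun x => ?_
    simp only [hD, hu_def, hw_def, Pi.zero_apply]
    rw [← mul_add]
    rcases le_total (B₁ x + V₁ x) (B₂ x + V₂ x) with h | h
    · exact mul_nonneg_of_nonpos_of_nonpos (by linarith [Real.exp_le_exp.2 h]) (by linarith)
    · exact mul_nonneg (by linarith [Real.exp_le_exp.2 h]) (by linarith)
  have iww := int_dot w w hw1 hw1 hwp hwp
  have iwu := int_dot w u hw1 hu hwp hup
  have iuu := int_dot u u hu hu hup hup
  have hsq : 0 ≤ (∫ x, dotP (grad w x) (grad w x) ∂(torusMeasure (n+1))) + 2 * (∫ x, dotP (grad w x) (grad u x) ∂(torusMeasure (n+1))) + ∫ x, dotP (grad u x) (grad u x) ∂(torusMeasure (n+1)) := by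
    have iadd : Integrable (fun x => dotP (grad w x) (grad w x) + 2 * dotP (grad w x) (grad u x)) (torusMeasure (n+1)) :=
      iww.add (iwu.const_mul 2)
    rw [← integral_const_mul, ← integral_add iww (iwu.const_mul 2), ← integral_add iadd iuu]
    refine integral_nonneg fun x => ?_
    simp only [dotP, Pi.zero_apply]
    rw [Finset.mul_sum, ← Finset.sum_add_distrib, ← Finset.sum_add_distrib]
    refine Finset.sum_nonneg fun i _ => ?_
    nlinarith [sq_nonneg (grad w x i + grad u x i)]
  have hfin : ε ^ 2 * ((∫ x, dotP (grad w x) (grad w x) ∂(torusMeasure (n+1))) + ∫ x, dotP (grad w x) (grad u x) ∂(torusMeasure (n+1))) ≤ 0 := by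
    rw [mul_add, gw, gu]; linarith
  have hε2 : 0 < ε ^ 2 := by positivity
  have := nonpos_of_mul_nonpos_right hfin hε2
  linarith

/-- Full stability estimate for the smooth parts of the potential in terms
of the Wasserstein distance of the densities. -/
theorem statement10 (d : ℕ) (hd : d = 2 ∨ d = 3) :
    ∃ C : ℝ, 0 < C ∧
      ∀ ε : ℝ, 0 < ε →
      ∀ h₁ h₂ Ubar₁ Ubar₂ Uhat₁ Uhat₂ : (Fin d → ℝ) → ℝ,
        Measurable h₁ → Measurable h₂ →
        ZPeriodic h₁ → ZPeriodic h₂ →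
        (∀ x, 0 ≤ h₁ x) → (∀ x, 0 ≤ h₂ x) →
        (∫ x, h₁ x ∂(torusMeasure d)) = 1 → (∫ x, h₂ x ∂(torusMeasure d)) = 1 →
        MemLp h₁ ⊤ (torusMeasure d) → MemLp h₂ ⊤ (torusMeasure d) →
        ContDiff ℝ 1 Ubar₁ → ContDiff ℝ 1 Ubar₂ →
        ZPeriodic Ubar₁ → ZPeriodic Ubar₂ →
        (∫ x, Ubar₁ x ∂(torusMeasure d)) = 0 → (∫ x, Ubar₂ x ∂(torusMeasure d)) = 0 →
        IsWeakPoisson ε Ubar₁ (fun x => h₁ x - 1) →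
        IsWeakPoisson ε Ubar₂ (fun x => h₂ x - 1) →
        ContDiff ℝ 2 Uhat₁ → ContDiff ℝ 2 Uhat₂ →
        ZPeriodic Uhat₁ → ZPeriodic Uhat₂ →
        (∀ x, ε ^ 2 * lap Uhat₁ x = Real.exp (Ubar₁ x + Uhat₁ x) - 1) →
        (∀ x, ε ^ 2 * lap Uhat₂ x = Real.exp (Ubar₂ x + Uhat₂ x) - 1) →
        (∫ x, euclNorm (grad Uhat₁ x - grad Uhat₂ x) ^ 2 ∂(torusMeasure d)) ≤
          Real.exp (Real.exp (C / ε ^ 2 *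
              (1 + max (LpNorm (((d : ℝ≥0∞) + 2) / d) h₁)
                (LpNorm (((d : ℝ≥0∞) + 2) / d) h₂)))) *
            max (LpNorm ⊤ h₁) (LpNorm ⊤ h₂) *
            WassPow 2 (densMeasure h₁) (densMeasure h₂) := by
  obtain ⟨n, rfl⟩ : ∃ n, d = n + 1 := by
    rcases hd with h | h
    · exact ⟨1, h⟩
    · exact ⟨2, h⟩
  set K : ℝ := 8 * 8 ^ (n+1) * 3 ^ (n+1) * ((n+1 : ℕ) : ℝ) with hK
  have hK0 : 0 ≤ K := by positivity
  refine ⟨2 * K + 1, by positivity, ?_⟩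
  intro ε hε h₁ h₂ B₁ B₂ V₁ V₂ hm₁ hm₂ _ _ h0₁ h0₂ hi₁ hi₂ hh₁ hh₂ hB₁ hB₂ pB₁ pB₂ _ _ hw₁ hw₂ hV₁ hV₂ pV₁ pV₂ e₁ e₂
  have hen := energy ε hε B₁ B₂ V₁ V₂ hB₁ hB₂ pB₁ pB₂ hV₁ hV₂ pV₁ pV₂ e₁ e₂
  have hwa := wass_est ε hε h₁ h₂ B₁ B₂ hm₁ hm₂ h0₁ h0₂ hi₁ hi₂ hh₁ hh₂ hB₁ hB₂ pB₁ pB₂ hw₁ hw₂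
  have hlhs : ∀ x, euclNorm (grad V₁ x - grad V₂ x) ^ 2 =
      dotP (grad (fun x => V₁ x - V₂ x) x) (grad (fun x => V₁ x - V₂ x) x) := by
    intro x
    rw [grad_fsub V₁ V₂ (hV₁.of_le (by norm_num)) (hV₂.of_le (by norm_num)), euclNorm,
      Real.sq_sqrt (Finset.sum_nonneg fun i _ => sq_nonneg _), dotP]
    exact Finset.sum_congr rfl fun i _ => sq _
  simp only [hlhs]
  refine hen.trans (hwa.trans ?_)
  have hM0 : 0 ≤ max (LpNorm ⊤ h₁) (LpNorm ⊤ h₂) := le_max_of_le_left ENNReal.toReal_nonneg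
  have hW0 : 0 ≤ WassPow 2 (densMeasure h₁) (densMeasure h₂) := by
    refine Real.sInf_nonneg ?_
    rintro c ⟨κ, _, _, rfl⟩
    exact integral_nonneg fun z => Real.rpow_nonneg (by rw [tdist_eq]; exact euclNorm_nonneg _) _
  refine mul_le_mul_of_nonneg_right (mul_le_mul_of_nonneg_right ?_ hM0) hW0
  set L := max (LpNorm ((((n+1 : ℕ) : ℝ≥0∞) + 2) / ((n+1 : ℕ) : ℝ≥0∞)) h₁)
    (LpNorm ((((n+1 : ℕ) : ℝ≥0∞) + 2) / ((n+1 : ℕ) : ℝ≥0∞)) h₂) with hL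
  have hL0 : 0 ≤ L := le_max_of_le_left ENNReal.toReal_nonneg
  set y := (2 * K + 1) / ε ^ 2 * (1 + L) with hy
  have hε2 : 0 < ε ^ 2 := by positivity
  have hy1 : (2 * K + 1) / ε ^ 2 ≤ y := by
    have : 0 ≤ (2 * K + 1) / ε ^ 2 := by positivity
    rw [hy]; nlinarith
  have hq0 : 0 ≤ (2 * K + 1) / ε ^ 2 := by positivity
  have hy0 : 0 ≤ y := hq0.trans hy1
  calc K / ε ^ 4 ≤ ((2 * K + 1) / ε ^ 2) ^ 2 / 2 := by
        rw [div_pow, div_div, ← pow_mul, div_le_div_iff₀ (by positivity) (by positivity)]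
        have : 0 < ε ^ 4 := by positivity
        rw [show 2 * 2 = 4 from rfl]
        nlinarith [mul_nonneg hK0 this.le, mul_nonneg (mul_nonneg hK0 hK0) this.le]
    _ ≤ y ^ 2 / 2 := by gcongr
    _ ≤ Real.exp y := by
        have := Real.quadratic_le_exp_of_nonneg hy0
        linarith
    _ ≤ Real.exp (Real.exp y) := Real.exp_le_exp.2 (by linarith [Real.add_one_le_exp y])
end

section
/- There exists a universal constant C > 0 such that the following holds. Let C₀ > 0 and M ≥ 2, and let ρ : 𝕋² → [0,∞) be measurable with ∫_{𝕋²} ρ dx = 1, ‖ρ‖_{L²(𝕋²)} ≤ C₀ and ‖ρ‖_{L^∞(𝕋²)} ≤ M. Then sup_{x ∈ 𝕋²} ∫_{𝕋²} |ρ(y) − 1| / d(x,y) dy ≤ C (1 + C₀) ( 1 + (log M)^{1/2} ). -/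
open MeasureTheory Real Set
open scoped ENNReal

section AuxTorus

lemma aux_even (F : ℝ → ℝ≥0∞) :
    ∫⁻ a in Ioc (-(1/2):ℝ) (1/2), F |a| = 2 * ∫⁻ t in Ioc (0:ℝ) (1/2), F t := by
  have hU : Ioc (-(1/2):ℝ) (1/2) = Ioc (-(1/2):ℝ) 0 ∪ Ioc (0:ℝ) (1/2) := by
    rw [Ioc_union_Ioc_eq_Ioc] <;> norm_num
  have h1 : ∫⁻ a in Ioc (0:ℝ) (1/2), F |a| = ∫⁻ t in Ioc (0:ℝ) (1/2), F t := by
    refine setLIntegral_congr_fun measurableSet_Ioc ?_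
    intro a ha
    simp only [abs_of_pos ha.1]
  have h2 : ∫⁻ a in Ioc (-(1/2):ℝ) 0, F |a| = ∫⁻ t in Ioc (0:ℝ) (1/2), F |t| := by
    have := (Measure.measurePreserving_neg (volume : Measure ℝ)).setLIntegral_comp_emb
      (MeasurableEquiv.neg ℝ).measurableEmbedding (fun a => F |a|) (Ioc (-(1/2):ℝ) 0)
    simp only [abs_neg] at this
    rw [this]
    have h3 : (Neg.neg '' Ioc (-(1/2):ℝ) 0) = Ico (0:ℝ) (1/2) := by
      rw [Set.image_neg_eq_neg]; simp
    rw [show ((fun x : ℝ => -x) '' Ioc (-(1/2):ℝ) 0) = Ico (0:ℝ) (1/2) from h3]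
    exact setLIntegral_congr Ico_ae_eq_Ioc
  rw [hU, lintegral_union measurableSet_Ioc, h2, h1, two_mul]
  rw [Set.disjoint_left]
  intro a ha hb
  exact absurd ha.2 (not_le.mpr hb.1)

lemma aux_circle (F : ℝ → ℝ≥0∞) (c : ℝ) :
    ∫⁻ y in Ico (0:ℝ) 1, F ‖((c - y : ℝ) : UnitAddCircle)‖ =
      2 * ∫⁻ t in Ioc (0:ℝ) (1/2), F t := by
  rw [setLIntegral_congr Ico_ae_eq_Ioc]
  have h1 := UnitAddCircle.lintegral_preimage 0 (fun b : UnitAddCircle => F ‖(c : UnitAddCircle) - b‖)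
  have h2 := UnitAddCircle.lintegral_preimage (-(1/2)) (fun b : UnitAddCircle => F ‖b‖)
  rw [zero_add] at h1
  have h3 : ∫⁻ b : UnitAddCircle, F ‖(c : UnitAddCircle) - b‖ = ∫⁻ b : UnitAddCircle, F ‖b‖ :=
    lintegral_sub_left_eq_self (fun b : UnitAddCircle => F ‖b‖) (c : UnitAddCircle)
  rw [← aux_even]
  simp only [AddCircle.coe_sub]
  rw [h1, h3, ← h2]
  rw [show (-(1/2) + 1 : ℝ) = 1/2 by norm_num]
  refine setLIntegral_congr_fun measurableSet_Ioc ?_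
  intro a ha
  have : ‖(a : UnitAddCircle)‖ = |a| := by
    rw [AddCircle.norm_coe_eq_abs_iff 1 one_ne_zero]
    rw [abs_one, abs_le]; constructor <;> linarith [ha.1, ha.2]
  simp only [this]

lemma aux_tonelli (f : ℝ → ℝ → ℝ≥0∞) (hf : Measurable (Function.uncurry f)) :
    ∫⁻ y, f (y 0) (y 1) ∂(torusMeasure 2) =
      ∫⁻ a in Ico (0:ℝ) 1, ∫⁻ b in Ico (0:ℝ) 1, f a b := by
  have hp := volume_preserving_finTwoArrow ℝ
  have hs : Tcube 2 = (MeasurableEquiv.finTwoArrow : (Fin 2 → ℝ) ≃ᵐ ℝ × ℝ) ⁻¹'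
      (Ico (0:ℝ) 1 ×ˢ Ico (0:ℝ) 1) := by
    ext y
    simp [Tcube, Set.mem_pi, Fin.forall_fin_two, MeasurableEquiv.finTwoArrow]
  have h := hp.setLIntegral_comp_preimage_emb
    (MeasurableEquiv.finTwoArrow : (Fin 2 → ℝ) ≃ᵐ ℝ × ℝ).measurableEmbedding
    (Function.uncurry f) (Ico (0:ℝ) 1 ×ˢ Ico (0:ℝ) 1)
  rw [← hs] at h
  have h' : ∫⁻ y, f (y 0) (y 1) ∂(torusMeasure 2) =
    ∫⁻ b in Ico (0:ℝ) 1 ×ˢ Ico (0:ℝ) 1, Function.uncurry f b := h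
  rw [h', Measure.volume_eq_prod, ← Measure.prod_restrict, lintegral_prod _ hf.aemeasurable]
  rfl

lemma aux_q_meas (c : ℝ) : Measurable (fun y : ℝ => ‖((c - y : ℝ) : UnitAddCircle)‖) := by
  have : Continuous (fun y : ℝ => ‖((c - y : ℝ) : UnitAddCircle)‖) :=
    ((AddCircle.continuous_mk' 1).comp (by fun_prop : Continuous fun y : ℝ => c - y)).norm
  exact this.measurable

lemma aux_tdist (x y : Fin 2 → ℝ) (i : Fin 2) :
    ‖((x i - y i : ℝ) : UnitAddCircle)‖ ≤ tdist x y := by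
  unfold tdist
  refine le_ciInf fun k => ?_
  rw [UnitAddCircle.norm_eq]
  refine (round_le (x i - y i) (-(k i))).trans ?_
  unfold euclNorm
  apply Real.le_sqrt_of_sq_le
  rw [sq_abs]
  refine le_trans (le_of_eq ?_) (Finset.single_le_sum (f := fun j => ((x - y + latVec k) j)^2)
    (fun j _ => sq_nonneg _) (Finset.mem_univ i))
  simp [latVec]

lemma aux_ftc (f f' : ℝ → ℝ) (h : ∀ t ∈ Icc (0:ℝ) (1/2), HasDerivAt f (f' t) t)
    (hc : ContinuousOn f' (Icc (0:ℝ) (1/2))) (hn : ∀ t ∈ Icc (0:ℝ) (1/2), 0 ≤ f' t) :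
    ∫⁻ t in Ioc (0:ℝ) (1/2), ENNReal.ofReal (f' t) = ENNReal.ofReal (f (1/2) - f 0) := by
  have hu : uIcc (0:ℝ) (1/2) = Icc 0 (1/2) := uIcc_of_le (by norm_num)
  have hi : IntervalIntegrable f' volume 0 (1/2) :=
    ContinuousOn.intervalIntegrable (by rwa [hu])
  rw [← intervalIntegral.integral_eq_sub_of_hasDerivAt (by rwa [hu]) hi,
    intervalIntegral.integral_of_le (by norm_num), ofReal_integral_eq_lintegral_ofReal]
  · exact (intervalIntegrable_iff_integrableOn_Ioc_of_le (by norm_num)).1 hi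
  · refine (ae_restrict_iff' measurableSet_Ioc).2 (ae_of_all _ fun t ht => ?_)
    exact hn t ⟨ht.1.le, ht.2⟩

/-- the far kernel -/
lemma aux_far (l : ℝ) (hl : 0 < l) (x : Fin 2 → ℝ) :
    ∫⁻ y, ENNReal.ofReal (1 / (l + ‖((x 0 - y 0 : ℝ) : UnitAddCircle)‖
        + ‖((x 1 - y 1 : ℝ) : UnitAddCircle)‖) ^ 2) ∂(torusMeasure 2)
      ≤ 4 * ENNReal.ofReal (Real.log ((l + 1/2) / l)) := by
  have m0 := aux_q_meas (x 0)
  have m1 := aux_q_meas (x 1)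
  rw [aux_tonelli (fun a b => ENNReal.ofReal (1 / (l + ‖((x 0 - a : ℝ) : UnitAddCircle)‖
        + ‖((x 1 - b : ℝ) : UnitAddCircle)‖) ^ 2))]
  swap
  · apply Measurable.ennreal_ofReal
    have h0 : Measurable (fun p : ℝ × ℝ => ‖((x 0 - p.1 : ℝ) : UnitAddCircle)‖) :=
      m0.comp measurable_fst
    have h1 : Measurable (fun p : ℝ × ℝ => ‖((x 1 - p.2 : ℝ) : UnitAddCircle)‖) :=
      m1.comp measurable_snd
    fun_prop
  have inner : ∀ m : ℝ, 0 < m → ∫⁻ b in Ico (0:ℝ) 1,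
      ENNReal.ofReal (1 / (m + ‖((x 1 - b : ℝ) : UnitAddCircle)‖) ^ 2) ≤
        2 * ENNReal.ofReal (1 / m) := by
    intro m hm
    rw [aux_circle (fun t => ENNReal.ofReal (1 / (m + t) ^ 2))]
    gcongr
    rw [aux_ftc (fun t => - (m + t)⁻¹) (fun t => 1 / (m + t)^2)]
    · apply ENNReal.ofReal_le_ofReal
      have : 0 < (m + 1/2)⁻¹ := by positivity
      simp only [add_zero, one_div] at *
      linarith
    · intro t ht
      have h0 : m + t ≠ 0 := by linarith [ht.1]
      have hd : HasDerivAt (fun t => - (m + t)⁻¹) (-(-1 / (m + t)^2)) t :=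
        (((hasDerivAt_id t).const_add m).inv h0).neg
      rwa [neg_div, neg_neg] at hd
    · refine ContinuousOn.div (by fun_prop) (by fun_prop) fun t ht => ?_
      have h0 : 0 < m + t := by linarith [ht.1]
      positivity
    · intro t ht; positivity
  calc _ ≤ ∫⁻ a in Ico (0:ℝ) 1, 2 * ENNReal.ofReal (1 / (l + ‖((x 0 - a : ℝ) : UnitAddCircle)‖)) :=
        lintegral_mono fun a => inner _ (by positivity)
    _ = _ := by
      rw [lintegral_const_mul' _ _ (by simp),
        aux_circle (fun t => ENNReal.ofReal (1 / (l + t))),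
        aux_ftc (fun t => Real.log (l + t)) (fun t => 1 / (l + t)), ← mul_assoc,
        Real.log_div (by positivity) (by positivity)]
      · norm_num
      · intro t ht
        have h0 : l + t ≠ 0 := by linarith [ht.1]
        exact ((hasDerivAt_id t).const_add l).log h0
      · refine ContinuousOn.div (by fun_prop) (by fun_prop) fun t ht => ?_
        have h0 : 0 < l + t := by linarith [ht.1]
        positivity
      · intro t ht
        have h0 : 0 < l + t := by linarith [ht.1]
        positivity

/-- the near kernel -/
noncomputable def auxA (l : ℝ) (t : ℝ) : ℝ≥0∞ := if t ≤ l then ((ENNReal.ofReal t)⁻¹) ^ (1/2:ℝ) else 0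

lemma auxA_meas (l : ℝ) : Measurable (auxA l) := by
  unfold auxA
  refine Measurable.ite measurableSet_Iic ?_ measurable_const
  fun_prop

lemma auxA_int (l : ℝ) (hl : 0 < l) (hl2 : l ≤ 1/2) :
    ∫⁻ t in Ioc (0:ℝ) (1/2), auxA l t = ENNReal.ofReal (2 * Real.sqrt l) := by
  have e : ∀ t, auxA l t = (Iic l).indicator (fun t => ((ENNReal.ofReal t)⁻¹) ^ (1/2:ℝ)) t := by
    intro t; simp [auxA, Set.indicator]
  simp_rw [e]
  rw [setLIntegral_indicator measurableSet_Iic]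
  rw [show Iic l ∩ Ioc (0:ℝ) (1/2) = Ioc 0 l by
    ext t; simp only [mem_inter_iff, mem_Iic, mem_Ioc]
    constructor
    · rintro ⟨a, b, c⟩; exact ⟨b, a⟩
    · rintro ⟨a, b⟩; exact ⟨b, a, b.trans hl2⟩]
  have h1 : ∫⁻ t in Ioc 0 l, ((ENNReal.ofReal t)⁻¹) ^ (1/2:ℝ) =
      ∫⁻ t in Ioc 0 l, ENNReal.ofReal (t ^ (-(1/2):ℝ)) := by
    refine setLIntegral_congr_fun measurableSet_Ioc ?_
    intro t ht
    simp only
    rw [ENNReal.inv_rpow, ENNReal.ofReal_rpow_of_pos ht.1, Real.rpow_neg ht.1.le,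
      ENNReal.ofReal_inv_of_pos (Real.rpow_pos_of_pos ht.1 _)]
  have hi : IntervalIntegrable (fun t : ℝ => t ^ (-(1/2):ℝ)) volume 0 l :=
    intervalIntegral.intervalIntegrable_rpow' (by norm_num)
  rw [h1, ← ofReal_integral_eq_lintegral_ofReal, ← intervalIntegral.integral_of_le hl.le,
    integral_rpow (Or.inl (by norm_num))]
  · congr 1
    rw [Real.sqrt_eq_rpow, show (-(1/2) + 1 : ℝ) = 1/2 by norm_num, Real.zero_rpow (by norm_num)]
    ring
  · exact (intervalIntegrable_iff_integrableOn_Ioc_of_le hl.le).1 hi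
  · refine (ae_restrict_iff' measurableSet_Ioc).2 (ae_of_all _ fun t ht => ?_)
    exact Real.rpow_nonneg ht.1.le _

lemma aux_near (l : ℝ) (hl : 0 < l) (hl2 : l ≤ 1/2) (x : Fin 2 → ℝ) :
    ∫⁻ y, auxA l ‖((x 0 - y 0 : ℝ) : UnitAddCircle)‖ * auxA l ‖((x 1 - y 1 : ℝ) : UnitAddCircle)‖
      ∂(torusMeasure 2) = ENNReal.ofReal (16 * l) := by
  have m0 : Measurable (fun a : ℝ => auxA l ‖((x 0 - a : ℝ) : UnitAddCircle)‖) :=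
    (auxA_meas l).comp (aux_q_meas (x 0))
  have m1 : Measurable (fun a : ℝ => auxA l ‖((x 1 - a : ℝ) : UnitAddCircle)‖) :=
    (auxA_meas l).comp (aux_q_meas (x 1))
  rw [aux_tonelli (fun a b => auxA l ‖((x 0 - a : ℝ) : UnitAddCircle)‖ *
    auxA l ‖((x 1 - b : ℝ) : UnitAddCircle)‖)
    ((m0.comp measurable_fst).mul (m1.comp measurable_snd))]
  rw [lintegral_lintegral_mul m0.aemeasurable m1.aemeasurable]
  rw [aux_circle, aux_circle, auxA_int l hl hl2]
  rw [show (2:ℝ≥0∞) = ENNReal.ofReal 2 by simp, ← ENNReal.ofReal_mul (by norm_num),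
    ← ENNReal.ofReal_mul (by positivity)]
  congr 1
  nlinarith [Real.mul_self_sqrt hl.le]

lemma aux_inv_le (l a b d : ℝ) (hal : a ≤ l) (hbl : b ≤ l) (had : a ≤ d) (hbd : b ≤ d) :
    (ENNReal.ofReal d)⁻¹ ≤ auxA l a * auxA l b := by
  have h : (ENNReal.ofReal d)⁻¹ =
      ((ENNReal.ofReal d)⁻¹) ^ (1/2:ℝ) * ((ENNReal.ofReal d)⁻¹) ^ (1/2:ℝ) := by
    rw [← ENNReal.rpow_add_of_nonneg _ _ (by norm_num) (by norm_num)]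
    norm_num
  rw [h, auxA, auxA, if_pos hal, if_pos hbl]
  gcongr

lemma aux_pt_s11 (l a b d w M : ℝ) (hl : 0 < l) (ha : 0 ≤ a) (hb : 0 ≤ b)
    (had : a ≤ d) (hbd : b ≤ d) (hw : 0 ≤ w) (hwM : w ≤ M) :
    ENNReal.ofReal (w / d) ≤ ENNReal.ofReal M * (auxA l a * auxA l b) +
      ENNReal.ofReal w * ENNReal.ofReal (3 * (1 / (l + a + b))) := by
  by_cases h : a ≤ l ∧ b ≤ l
  · refine le_trans ?_ le_self_add
    rcases (ha.trans had).eq_or_lt with h0 | h0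
    · simp [← h0]
    rw [ENNReal.ofReal_div_of_pos h0, div_eq_mul_inv]
    gcongr
    exact aux_inv_le l a b d h.1 h.2 had hbd
  · refine le_trans ?_ le_add_self
    rw [← ENNReal.ofReal_mul hw]
    apply ENNReal.ofReal_le_ofReal
    rw [div_eq_mul_inv]
    gcongr
    have hd : l ≤ d := by
      by_contra hc
      push Not at hc
      exact h ⟨by linarith, by linarith⟩
    have h0 : 0 < d := by linarith
    rw [mul_one_div, inv_eq_one_div, div_le_div_iff₀ h0 (by positivity)]
    linarith

end AuxTorus

/-- Interpolation estimate in dimension two: for a probability density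
`ρ` on `𝕋²` with `‖ρ‖_{L²} ≤ C₀` and `‖ρ‖_{L^∞} ≤ M`,
`sup_x ∫ |ρ(y) − 1|/d(x,y) dy ≤ C (1 + C₀)(1 + (log M)^{1/2})`. -/
theorem statement11 :
    ∃ C : ℝ, 0 < C ∧
      ∀ C₀ M : ℝ, 0 < C₀ → 2 ≤ M →
      ∀ ρ : (Fin 2 → ℝ) → ℝ,
        Measurable ρ → ZPeriodic ρ → (∀ x, 0 ≤ ρ x) →
        (∫ x, ρ x ∂(torusMeasure 2)) = 1 →
        eLpNorm ρ 2 (torusMeasure 2) ≤ ENNReal.ofReal C₀ →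
        eLpNorm ρ ⊤ (torusMeasure 2) ≤ ENNReal.ofReal M →
        ∀ x, (∫ y, |ρ y - 1| / tdist x y ∂(torusMeasure 2)) ≤
          C * (1 + C₀) * (1 + Real.sqrt (Real.log M)) := by
  refine ⟨16, by norm_num, ?_⟩
  intro C₀ M hC hM ρ hρ _ hpos _ h2 hinf x
  have hM0 : 0 < M := by linarith
  obtain ⟨l, hl_def⟩ : ∃ l : ℝ, l = 1 / M := ⟨_, rfl⟩
  have hl : 0 < l := by rw [hl_def]; positivity
  have hl2 : l ≤ 1/2 := by
    rw [hl_def]; exact one_div_le_one_div_of_le (by norm_num) hM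
  have hMl : M * l = 1 := by rw [hl_def]; field_simp
  have hprob : torusMeasure 2 univ = 1 := by
    simp [torusMeasure, Tcube, volume_pi_pi]
  have hlog : 0 ≤ Real.log M := Real.log_nonneg (by linarith)
  -- sup bound
  have hae : ∀ᵐ y ∂(torusMeasure 2), |ρ y - 1| ≤ M := by
    rw [eLpNorm_exponent_top] at hinf
    filter_upwards [ae_le_eLpNormEssSup (f := ρ) (μ := torusMeasure 2)] with y hy
    have h := hy.trans hinf
    rw [Real.enorm_eq_ofReal (hpos y), ENNReal.ofReal_le_ofReal_iff hM0.le] at h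
    rw [abs_le]; constructor <;> linarith [hpos y]
  -- L2 bound
  have hL2 : (∫⁻ y, ENNReal.ofReal |ρ y - 1| ^ (2:ℝ) ∂(torusMeasure 2)) ^ (1/2:ℝ)
      ≤ ENNReal.ofReal (1 + C₀) := by
    have h := eLpNorm_sub_le (μ := torusMeasure 2) (p := 2) (f := ρ) (g := fun _ => (1:ℝ))
      hρ.aestronglyMeasurable aestronglyMeasurable_const (by norm_num)
    have h1 : eLpNorm (fun _ : Fin 2 → ℝ => (1:ℝ)) 2 (torusMeasure 2) = 1 := by
      rw [eLpNorm_const' _ (by norm_num) (by norm_num), hprob]; simp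
    rw [h1] at h
    rw [eLpNorm_eq_lintegral_rpow_enorm_toReal (by norm_num) (by norm_num)] at h
    simp only [Pi.sub_apply, ENNReal.toReal_ofNat, Real.enorm_eq_ofReal_abs] at h
    refine h.trans ?_
    rw [ENNReal.ofReal_add (by norm_num) hC.le, add_comm, ENNReal.ofReal_one]
    gcongr
  have hK : (∫⁻ y, ENNReal.ofReal (3 * (1 / (l + ‖((x 0 - y 0 : ℝ) : UnitAddCircle)‖
        + ‖((x 1 - y 1 : ℝ) : UnitAddCircle)‖))) ^ (2:ℝ) ∂(torusMeasure 2)) ^ (1/2:ℝ)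
      ≤ ENNReal.ofReal (6 * Real.sqrt (Real.log M)) := by
    have hle : ∫⁻ y, ENNReal.ofReal (3 * (1 / (l + ‖((x 0 - y 0 : ℝ) : UnitAddCircle)‖
        + ‖((x 1 - y 1 : ℝ) : UnitAddCircle)‖))) ^ (2:ℝ) ∂(torusMeasure 2)
        ≤ ENNReal.ofReal ((6 * Real.sqrt (Real.log M)) ^ 2) := by
      have e : ∀ y : Fin 2 → ℝ, ENNReal.ofReal (3 * (1 / (l + ‖((x 0 - y 0 : ℝ) : UnitAddCircle)‖
        + ‖((x 1 - y 1 : ℝ) : UnitAddCircle)‖))) ^ (2:ℝ) =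
          ENNReal.ofReal 9 * ENNReal.ofReal (1 / (l + ‖((x 0 - y 0 : ℝ) : UnitAddCircle)‖
        + ‖((x 1 - y 1 : ℝ) : UnitAddCircle)‖) ^ 2) := by
        intro y
        rw [ENNReal.rpow_two, ← ENNReal.ofReal_pow (by positivity),
          ← ENNReal.ofReal_mul (by norm_num)]
        congr 1
        rw [mul_pow, div_pow]; norm_num
      simp_rw [e]
      rw [lintegral_const_mul' _ _ (by simp)]
      refine (mul_le_mul_right (aux_far l hl x) _).trans ?_
      rw [show (4:ℝ≥0∞) = ENNReal.ofReal 4 by simp, ← ENNReal.ofReal_mul (by norm_num),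
        ← ENNReal.ofReal_mul (by norm_num)]
      apply ENNReal.ofReal_le_ofReal
      rw [mul_pow, Real.sq_sqrt hlog]
      have : Real.log ((l + 1/2) / l) ≤ Real.log M := by
        apply Real.log_le_log (by positivity)
        rw [div_le_iff₀ hl, hMl]; linarith
      linarith
    calc _ ≤ (ENNReal.ofReal ((6 * Real.sqrt (Real.log M)) ^ 2)) ^ (1/2:ℝ) := by gcongr
      _ = _ := by
        rw [ENNReal.ofReal_pow (by positivity), ← ENNReal.rpow_two, ← ENNReal.rpow_mul]
        norm_num
  have mA : Measurable (fun y : Fin 2 → ℝ => auxA l ‖((x 0 - y 0 : ℝ) : UnitAddCircle)‖ *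
      auxA l ‖((x 1 - y 1 : ℝ) : UnitAddCircle)‖) :=
    (((auxA_meas l).comp (aux_q_meas (x 0))).comp (measurable_pi_apply 0)).mul
      (((auxA_meas l).comp (aux_q_meas (x 1))).comp (measurable_pi_apply 1))
  have mK : Measurable (fun y : Fin 2 → ℝ => ENNReal.ofReal
      (3 * (1 / (l + ‖((x 0 - y 0 : ℝ) : UnitAddCircle)‖
        + ‖((x 1 - y 1 : ℝ) : UnitAddCircle)‖)))) := by
    have h0 := (aux_q_meas (x 0)).comp (measurable_pi_apply (X := fun _ : Fin 2 => ℝ) 0)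
    have h1 := (aux_q_meas (x 1)).comp (measurable_pi_apply (X := fun _ : Fin 2 => ℝ) 1)
    simp only [Function.comp_def] at h0 h1
    fun_prop
  have mw : Measurable (fun y => ENNReal.ofReal |ρ y - 1|) := by
    apply Measurable.ennreal_ofReal
    exact (hρ.sub_const 1).abs
  have key : ∫⁻ y, ENNReal.ofReal ‖|ρ y - 1| / tdist x y‖ ∂(torusMeasure 2) ≤
      ENNReal.ofReal (16 + (1 + C₀) * (6 * Real.sqrt (Real.log M))) := by
    calc _ ≤ ∫⁻ y, (ENNReal.ofReal M * (auxA l ‖((x 0 - y 0 : ℝ) : UnitAddCircle)‖ *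
          auxA l ‖((x 1 - y 1 : ℝ) : UnitAddCircle)‖) +
          ENNReal.ofReal |ρ y - 1| * ENNReal.ofReal
            (3 * (1 / (l + ‖((x 0 - y 0 : ℝ) : UnitAddCircle)‖
            + ‖((x 1 - y 1 : ℝ) : UnitAddCircle)‖)))) ∂(torusMeasure 2) := by
          apply lintegral_mono_ae
          filter_upwards [hae] with y hy
          have h0 := aux_tdist x y 0
          have h1 := aux_tdist x y 1
          rw [Real.norm_of_nonneg (div_nonneg (abs_nonneg _) ((norm_nonneg _).trans h0))]
          exact aux_pt_s11 l _ _ _ _ M hl (norm_nonneg _) (norm_nonneg _) h0 h1 (abs_nonneg _) hy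
      _ = ENNReal.ofReal M * ENNReal.ofReal (16 * l) +
          ∫⁻ y, ENNReal.ofReal |ρ y - 1| * ENNReal.ofReal
            (3 * (1 / (l + ‖((x 0 - y 0 : ℝ) : UnitAddCircle)‖
            + ‖((x 1 - y 1 : ℝ) : UnitAddCircle)‖))) ∂(torusMeasure 2) := by
          rw [lintegral_add_left (mA.const_mul _), lintegral_const_mul' _ _ (by simp),
            aux_near l hl hl2 x]
      _ ≤ ENNReal.ofReal M * ENNReal.ofReal (16 * l) +
          ENNReal.ofReal (1 + C₀) * ENNReal.ofReal (6 * Real.sqrt (Real.log M)) := by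
          gcongr
          refine (ENNReal.lintegral_mul_le_Lp_mul_Lq _ Real.HolderConjugate.two_two
            mw.aemeasurable mK.aemeasurable).trans ?_
          exact mul_le_mul' hL2 hK
      _ = _ := by
          rw [← ENNReal.ofReal_mul hM0.le, ← ENNReal.ofReal_mul (by positivity),
            ← ENNReal.ofReal_add (by positivity) (by positivity)]
          congr 2
          linarith
  have hfin := norm_integral_le_lintegral_norm (μ := torusMeasure 2)
    (fun y => |ρ y - 1| / tdist x y)
  have hs := Real.sqrt_nonneg (Real.log M)
  calc _ ≤ _ := Real.le_norm_self _
    _ ≤ _ := hfin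
    _ ≤ 16 + (1 + C₀) * (6 * Real.sqrt (Real.log M)) := by
        apply ENNReal.toReal_le_of_le_ofReal (by positivity) key
    _ ≤ _ := by nlinarith [mul_nonneg hC.le hs]
end

section
/- Let d ≥ 1 be an integer and define H : (0,∞) → ℝ by H(x) = x ( log( x / (16 d) ) )² for 0 < x ≤ d, and H(x) = d ( log 16 )² for x > d. Then H is concave on (0,∞). -/
open MeasureTheory Real Set
open scoped ENNReal

theorem aux_hasDeriv (c x : ℝ) (hc : 0 < c) (hx : 0 < x) :
    HasDerivAt (fun y : ℝ => y * (Real.log (y / c)) ^ 2)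
      ((Real.log (x / c) + 1) ^ 2 - 1) x := by
  have h1 : HasDerivAt (fun y : ℝ => y / c) (1 / c) x := (hasDerivAt_id x).div_const c
  have h2 := h1.log (by positivity)
  have h3 := (hasDerivAt_id x).mul (h2.pow 2)
  refine h3.congr_deriv ?_
  simp
  field_simp
  ring

theorem aux_log (D x : ℝ) (hD : 0 < D) (hx : 0 < x) (hxD : x ≤ D) :
    Real.log (x / (16 * D)) ≤ -2 := by
  have h2 : (2:ℝ) ≤ Real.log 16 := by
    have h : (16:ℝ) = 2 ^ 4 := by norm_num
    rw [h, Real.log_pow]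
    have := Real.log_two_gt_d9
    push_cast
    linarith
  have h1 : Real.log (x / (16 * D)) ≤ Real.log (16⁻¹) := by
    apply Real.log_le_log (by positivity)
    rw [div_le_iff₀ (by positivity)]
    linarith
  rw [Real.log_inv] at h1
  linarith

theorem aux_mono (D : ℝ) (hD : 0 < D) :
    MonotoneOn (fun y : ℝ => y * (Real.log (y / (16 * D))) ^ 2) (Set.Ioc 0 D) := by
  apply monotoneOn_of_deriv_nonneg (convex_Ioc 0 D)
  · intro x hx
    exact (aux_hasDeriv (16 * D) x (by positivity) hx.1).continuousAt.continuousWithinAt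
  · intro x hx
    rw [interior_Ioc] at hx
    exact (aux_hasDeriv (16 * D) x (by positivity)
      hx.1).differentiableAt.differentiableWithinAt
  · intro x hx
    rw [interior_Ioc] at hx
    rw [(aux_hasDeriv (16 * D) x (by positivity) hx.1).deriv]
    have := aux_log D x hD hx.1 hx.2.le
    nlinarith

theorem aux_conc (D : ℝ) (hD : 0 < D) :
    ConcaveOn ℝ (Set.Ioc 0 D) (fun y : ℝ => y * (Real.log (y / (16 * D))) ^ 2) := by
  apply AntitoneOn.concaveOn_of_deriv (convex_Ioc 0 D)
  · intro x hx
    exact (aux_hasDeriv (16 * D) x (by positivity) hx.1).continuousAt.continuousWithinAt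
  · intro x hx
    rw [interior_Ioc] at hx
    exact (aux_hasDeriv (16 * D) x (by positivity)
      hx.1).differentiableAt.differentiableWithinAt
  · intro x hx y hy hxy
    rw [interior_Ioc] at hx hy
    rw [(aux_hasDeriv (16 * D) x (by positivity) hx.1).deriv,
      (aux_hasDeriv (16 * D) y (by positivity) hy.1).deriv]
    have h1 := aux_log D y hD hy.1 hy.2.le
    have h2 : Real.log (x / (16 * D)) ≤ Real.log (y / (16 * D)) := by
      apply Real.log_le_log (div_pos hx.1 (by positivity))
      gcongr
    nlinarith

/-- The function `H(x) = x (log(x/(16d)))²` for `0 < x ≤ d`,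
`H(x) = d (log 16)²` for `x > d`, is concave on `(0,∞)`. -/
theorem statement12 (d : ℕ) (hd : 1 ≤ d) :
    ConcaveOn ℝ (Set.Ioi (0:ℝ))
      (fun x : ℝ => if x ≤ d then x * (Real.log (x / (16 * d))) ^ 2
        else d * (Real.log 16) ^ 2) := by
  have hD : (0:ℝ) < d := by exact_mod_cast hd
  have key : (fun x : ℝ => if x ≤ d then x * (Real.log (x / (16 * d))) ^ 2
        else d * (Real.log 16) ^ 2) =
      fun x : ℝ => (fun y : ℝ => y * (Real.log (y / (16 * d))) ^ 2) (min x d) := by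
    funext x
    by_cases h : x ≤ d
    · simp [h]
    · have h' : (d:ℝ) / (16 * d) = 16⁻¹ := by field_simp
      simp only [h, if_false, min_eq_right (not_le.mp h).le, h', Real.log_inv, neg_sq]
  rw [key]
  refine ⟨convex_Ioi 0, ?_⟩
  intro x hx y hy a b ha hb hab
  have hmx : min x (d:ℝ) ∈ Set.Ioc (0:ℝ) d := ⟨lt_min hx hD, min_le_right _ _⟩
  have hmy : min y (d:ℝ) ∈ Set.Ioc (0:ℝ) d := ⟨lt_min hy hD, min_le_right _ _⟩
  have hs : a • x + b • y ∈ Set.Ioi (0:ℝ) := (convex_Ioi (0:ℝ)) hx hy ha hb hab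
  refine ((aux_conc d hD).2 hmx hmy ha hb hab).trans ?_
  have hc := (aux_conc d hD).1 hmx hmy ha hb hab
  refine aux_mono d hD hc ⟨lt_min hs hD, min_le_right _ _⟩ (le_min ?_ hc.2)
  simp only [smul_eq_mul]
  gcongr <;> exact min_le_left _ _
end

section
/- Let χ : ℝ^d → [0,∞) be a smooth probability density supported in the closed unit ball, and for r > 0 set χ_r(x) := r^{−d} χ(x/r). There exists a constant C, depending only on d and χ, such that for every Borel probability measure ν on 𝕋^d, every probability density h ∈ L^∞(𝕋^d), every r > 0, every p ∈ [1,∞] and every q ∈ [1,∞): ‖χ_r ∗ ν‖_{L^p(𝕋^d)} ≤ C ( ‖h‖_{L^p(𝕋^d)} + r^{−(q+d)} W_q^q(h dx, ν) ), where (χ_r ∗ ν)(x) := ∫_{𝕋^d} χ_r(x − y) dν(y) (with χ_r regarded as a ℤ^d-periodic function on 𝕋^d by periodisation). -/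
open MeasureTheory Real Set
open scoped ENNReal

theorem aux_schur {X : Type*} [MeasurableSpace X] (μ : Measure X) [IsFiniteMeasure μ]
    (E : Set (X × X)) (hE : MeasurableSet E) (V : ℝ≥0∞)
    (hx : ∀ᵐ x ∂μ, μ {y | (x, y) ∈ E} ≤ V) (hy : ∀ᵐ y ∂μ, μ {x | (x, y) ∈ E} ≤ V)
    (h : X → ℝ≥0∞) (hh : Measurable h) (p : ℝ≥0∞) (hp : 1 ≤ p) :
    eLpNorm (fun x => ∫⁻ y in {y | (x, y) ∈ E}, h y ∂μ) p μ ≤ V * eLpNorm h p μ := by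
  have hEx : ∀ x, MeasurableSet {y | (x, y) ∈ E} := fun x => measurable_prodMk_left hE
  by_cases hpt : p = ⊤
  · subst hpt
    have := eLpNorm_le_of_ae_enorm_bound (p := ⊤) (μ := μ)
      (f := fun x => ∫⁻ y in {y | (x, y) ∈ E}, h y ∂μ) (C := V * eLpNorm h ⊤ μ) ?_
    · simpa using this
    filter_upwards [hx] with x hx
    have h1 : ∀ᵐ y ∂μ, h y ≤ eLpNorm h ⊤ μ := by
      have := enorm_ae_le_eLpNormEssSup h μ
      simpa using this
    calc ‖∫⁻ y in {y | (x, y) ∈ E}, h y ∂μ‖ₑ = ∫⁻ y in {y | (x, y) ∈ E}, h y ∂μ := by simp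
      _ ≤ ∫⁻ y in {y | (x, y) ∈ E}, eLpNorm h ⊤ μ ∂μ :=
          lintegral_mono_ae (ae_restrict_of_ae h1)
      _ = eLpNorm h ⊤ μ * μ {y | (x, y) ∈ E} := by simp
      _ ≤ V * eLpNorm h ⊤ μ := by rw [mul_comm]; gcongr
  have hp0 : p ≠ 0 := (zero_lt_one.trans_le hp).ne'
  have hpr : 1 ≤ p.toReal := by
    rw [← ENNReal.toReal_one]; exact ENNReal.toReal_mono hpt hp
  have hpp : 0 < p.toReal := by linarith
  rw [eLpNorm_eq_lintegral_rpow_enorm_toReal hp0 hpt, eLpNorm_eq_lintegral_rpow_enorm_toReal hp0 hpt]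
  simp only [enorm_eq_self]
  have key : ∫⁻ x, (∫⁻ y in {y | (x, y) ∈ E}, h y ∂μ) ^ p.toReal ∂μ
      ≤ V ^ p.toReal * ∫⁻ x, h x ^ p.toReal ∂μ := by
    have s1 : ∀ᵐ x ∂μ, (∫⁻ y in {y | (x, y) ∈ E}, h y ∂μ) ^ p.toReal
        ≤ V ^ (p.toReal - 1) * ∫⁻ y in {y | (x, y) ∈ E}, h y ^ p.toReal ∂μ := by
      filter_upwards [hx] with x hx
      have := eLpNorm_le_eLpNorm_mul_rpow_measure_univ
        (μ := μ.restrict {y | (x, y) ∈ E}) hp (f := h) hh.aestronglyMeasurable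
      rw [eLpNorm_one_eq_lintegral_enorm, eLpNorm_eq_lintegral_rpow_enorm_toReal hp0 hpt] at this
      simp only [enorm_eq_self, Measure.restrict_apply_univ, ENNReal.toReal_one] at this
      calc _ ≤ ((∫⁻ y in {y | (x, y) ∈ E}, h y ^ p.toReal ∂μ) ^ (1 / p.toReal) *
                V ^ (1 / 1 - 1 / p.toReal)) ^ p.toReal := by
              refine ENNReal.rpow_le_rpow (this.trans ?_) hpp.le
              gcongr
              rw [sub_nonneg, div_le_div_iff₀ hpp one_pos]; linarith
        _ = _ := by
              rw [ENNReal.mul_rpow_of_nonneg _ _ hpp.le, ← ENNReal.rpow_mul, ← ENNReal.rpow_mul,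
                mul_comm]
              congr 1
              · congr 1; field_simp
              · rw [one_div_mul_cancel hpp.ne', ENNReal.rpow_one]
    have hm : Measurable fun z : X × X => E.indicator (fun z => h z.2 ^ p.toReal) z :=
      ((hh.comp measurable_snd).pow_const _).indicator hE
    calc _ ≤ ∫⁻ x, V ^ (p.toReal - 1) * ∫⁻ y in {y | (x, y) ∈ E}, h y ^ p.toReal ∂μ ∂μ :=
          lintegral_mono_ae s1
      _ = ∫⁻ x, V ^ (p.toReal - 1) * ∫⁻ y, E.indicator (fun z => h z.2 ^ p.toReal) (x, y) ∂μ ∂μ := by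
          congr 1; ext x; congr 1
          rw [← lintegral_indicator (hEx x)]
          rfl
      _ = V ^ (p.toReal - 1) *
            ∫⁻ x, ∫⁻ y, E.indicator (fun z => h z.2 ^ p.toReal) (x, y) ∂μ ∂μ :=
          lintegral_const_mul _ hm.lintegral_prod_right'
      _ = V ^ (p.toReal - 1) *
            ∫⁻ y, ∫⁻ x, E.indicator (fun z => h z.2 ^ p.toReal) (x, y) ∂μ ∂μ := by
          rw [lintegral_lintegral_swap]
          exact hm.aemeasurable
      _ ≤ V ^ (p.toReal - 1) * ∫⁻ y, V * h y ^ p.toReal ∂μ := by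
          gcongr 1
          refine lintegral_mono_ae ?_
          filter_upwards [hy] with y hy
          have : (fun x => E.indicator (fun z => h z.2 ^ p.toReal) (x, y)) =
              {x | (x, y) ∈ E}.indicator (fun _ => h y ^ p.toReal) := rfl
          have hms : MeasurableSet {x | (x, y) ∈ E} := measurable_prodMk_right hE
          rw [this, lintegral_indicator_const hms, mul_comm]
          gcongr
      _ = _ := by
          rw [lintegral_const_mul _ (hh.pow_const _), ← mul_assoc]
          congr 1
          conv_lhs => rw [← ENNReal.rpow_one V, ← ENNReal.rpow_mul]
          rw [← ENNReal.rpow_add_of_nonneg _ _ (by linarith) (by norm_num)]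
          congr 1; ring
  calc _ ≤ (V ^ p.toReal * ∫⁻ x, h x ^ p.toReal ∂μ) ^ (1 / p.toReal) := by gcongr
    _ = _ := by
      rw [ENNReal.mul_rpow_of_nonneg _ _ (by positivity), ← ENNReal.rpow_mul,
        mul_one_div_cancel hpp.ne', ENNReal.rpow_one]

theorem aux_norm_le_eucl {d : ℕ} (v : Fin d → ℝ) : ‖v‖ ≤ euclNorm v := by
  unfold euclNorm
  rw [pi_norm_le_iff_of_nonneg (Real.sqrt_nonneg _)]
  intro i
  rw [Real.norm_eq_abs, ← Real.sqrt_sq_eq_abs]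
  exact Real.sqrt_le_sqrt (Finset.single_le_sum (f := fun i => v i ^ 2)
    (fun i _ => sq_nonneg _) (Finset.mem_univ i))

/-- sup-norm neighbourhood of the diagonal on the torus -/
def closeSet (d : ℕ) (s : ℝ) : Set ((Fin d → ℝ) × (Fin d → ℝ)) :=
  {z | ∃ k : Fin d → ℤ, ‖z.1 - z.2 + latVec k‖ ≤ s}

theorem closeSet_meas (d : ℕ) (s : ℝ) : MeasurableSet (closeSet d s) := by
  have : closeSet d s = ⋃ k : Fin d → ℤ, {z | ‖z.1 - z.2 + latVec k‖ ≤ s} := by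
    ext z; simp [closeSet]
  rw [this]
  refine MeasurableSet.iUnion fun k => ?_
  exact (isClosed_le (by fun_prop) continuous_const).measurableSet

theorem closeSet_symm {d : ℕ} {s : ℝ} {x y : Fin d → ℝ} (h : (x, y) ∈ closeSet d s) :
    (y, x) ∈ closeSet d s := by
  obtain ⟨k, hk⟩ := h
  refine ⟨-k, ?_⟩
  rw [← norm_neg]
  have e : -(y - x + latVec (-k)) = x - y + latVec k := by
    ext i; simp [latVec]; ring
  rw [e]; exact hk

theorem closeSet_vol {d : ℕ} {r : ℝ} (hr : 0 < r) (hr1 : r ≤ 1) {x : Fin d → ℝ}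
    (hx : x ∈ Tcube d) :
    torusMeasure d {y | (x, y) ∈ closeSet d (2 * r)} ≤ ENNReal.ofReal (28 ^ d * r ^ d) := by
  classical
  set S : Finset (Fin d → ℤ) := Fintype.piFinset fun _ => Finset.Icc (-3) 3 with hS
  have hsub : {y | (x, y) ∈ closeSet d (2 * r)} ∩ Tcube d ⊆
      ⋃ k ∈ S, Metric.closedBall (x + latVec k) (2 * r) := by
    rintro y ⟨⟨k, hk⟩, hy⟩
    simp only [Set.mem_iUnion]
    refine ⟨k, ?_, ?_⟩
    · rw [hS, Fintype.mem_piFinset]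
      intro i
      have h1 := (norm_le_pi_norm _ i).trans hk
      have hxi := hx i (Set.mem_univ i)
      have hyi := hy i (Set.mem_univ i)
      simp only [Pi.add_apply, Pi.sub_apply, latVec, Real.norm_eq_abs, abs_le] at h1
      have a1 : (k i : ℝ) < 4 := by linarith [hxi.1, hxi.2, hyi.1, hyi.2]
      have a2 : (-4 : ℝ) < k i := by linarith [hxi.1, hxi.2, hyi.1, hyi.2]
      have a1' : k i < 4 := by exact_mod_cast a1
      have a2' : -4 < k i := by exact_mod_cast a2
      rw [Finset.mem_Icc]; omega
    · rw [Metric.mem_closedBall, dist_comm, dist_eq_norm]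
      have e : x + latVec k - y = x - y + latVec k := by
        ext i; simp; ring
      rw [e]; exact hk
  have hTm : MeasurableSet (Tcube d) := MeasurableSet.univ_pi fun _ => measurableSet_Ico
  unfold torusMeasure
  rw [Measure.restrict_apply' hTm]
  calc _ ≤ volume (⋃ k ∈ S, Metric.closedBall (x + latVec k) (2 * r)) := measure_mono hsub
    _ ≤ ∑ k ∈ S, volume (Metric.closedBall (x + latVec k) (2 * r)) := measure_biUnion_finset_le _ _
    _ = ∑ k ∈ S, ENNReal.ofReal ((2 * (2 * r)) ^ d) := by
        refine Finset.sum_congr rfl fun k _ => ?_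
        rw [Real.volume_pi_closedBall _ (by positivity), Fintype.card_fin]
    _ = ENNReal.ofReal (28 ^ d * r ^ d) := by
        rw [Finset.sum_const, hS, Fintype.card_piFinset]
        simp only [Int.card_Icc, Finset.prod_const, Finset.card_univ, Fintype.card_fin, nsmul_eq_mul]
        rw [← ENNReal.ofReal_natCast, ← ENNReal.ofReal_mul (by positivity)]
        congr 1
        rw [show ((3 + 1 - (-3) : ℤ).toNat) = 7 by rfl]
        push_cast
        rw [← mul_pow, ← mul_pow]; congr 1; ring

theorem torus_prob_s15 (d : ℕ) : IsProbabilityMeasure (torusMeasure d) := by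
  constructor
  unfold torusMeasure
  rw [Measure.restrict_apply_univ, Tcube, Real.volume_pi_Ico]
  simp

theorem tdist_nonneg {d : ℕ} (x y : Fin d → ℝ) : 0 ≤ tdist x y :=
  Real.iInf_nonneg fun _ => Real.sqrt_nonneg _

theorem tdist_le {d : ℕ} (x y : Fin d → ℝ) : tdist x y ≤ Real.sqrt d := by
  have hb : BddBelow (Set.range fun k : Fin d → ℤ => euclNorm (x - y + latVec k)) :=
    ⟨0, by rintro _ ⟨k, rfl⟩; exact Real.sqrt_nonneg _⟩
  refine (ciInf_le hb (fun i => -⌊x i - y i⌋)).trans ?_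
  refine Real.sqrt_le_sqrt ?_
  calc _ ≤ ∑ _i : Fin d, (1 : ℝ) := by
        refine Finset.sum_le_sum fun i _ => ?_
        simp only [Pi.add_apply, Pi.sub_apply, latVec]
        push_cast
        have h1 := Int.fract_nonneg (x i - y i)
        have h2 := Int.fract_lt_one (x i - y i)
        unfold Int.fract at h1 h2
        nlinarith
    _ = d := by simp

theorem tdist_meas (d : ℕ) :
    Measurable fun z : (Fin d → ℝ) × (Fin d → ℝ) => tdist z.1 z.2 := by
  unfold tdist euclNorm
  refine Measurable.iInf fun k => ?_
  apply Continuous.measurable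
  simp only [Pi.add_apply, Pi.sub_apply]
  fun_prop

theorem tdist_lt {d : ℕ} {x y : Fin d → ℝ} {r : ℝ} (h : tdist x y < r) :
    (x, y) ∈ closeSet d r := by
  obtain ⟨k, hk⟩ := exists_lt_of_ciInf_lt h
  exact ⟨k, (aux_norm_le_eucl _).trans hk.le⟩

theorem closeSet_trans {d : ℕ} {r s : ℝ} {x y z : Fin d → ℝ} (h : (x, y) ∈ closeSet d r)
    (h' : (y, z) ∈ closeSet d s) : (x, z) ∈ closeSet d (r + s) := by
  obtain ⟨k, hk⟩ := h
  obtain ⟨l, hl⟩ := h'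
  refine ⟨k + l, ?_⟩
  refine le_trans (le_of_eq ?_) ((norm_add_le _ _).trans (add_le_add hk hl))
  congr 1
  ext i; simp [latVec]; ring

theorem chi_bdd {d : ℕ} {χ : (Fin d → ℝ) → ℝ} (hc : Continuous χ)
    (hs : ∀ x, 1 < euclNorm x → χ x = 0) : ∃ M : ℝ, 0 < M ∧ ∀ x, |χ x| ≤ M := by
  obtain ⟨M, hM⟩ := (isCompact_closedBall (0 : Fin d → ℝ) 1).exists_bound_of_continuousOn
    hc.continuousOn
  refine ⟨max M 1, by positivity, fun x => ?_⟩
  by_cases hx : ‖x‖ ≤ 1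
  · exact (hM x (by simpa using hx)).trans (le_max_left _ _)
  · rw [hs x (lt_of_lt_of_le (not_le.1 hx) (aux_norm_le_eucl x))]
    simp

theorem scaled_zero {d : ℕ} {χ : (Fin d → ℝ) → ℝ}
    (hs : ∀ x, 1 < euclNorm x → χ x = 0) {r : ℝ} (hr : 0 < r) {x : Fin d → ℝ} (hx : r < ‖x‖) :
    scaledMollifier χ r x = 0 := by
  unfold scaledMollifier
  rw [hs, mul_zero]
  refine lt_of_lt_of_le ?_ (aux_norm_le_eucl _)
  have : (fun i => x i / r) = r⁻¹ • x := by ext i; simp; ring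
  rw [this, norm_smul, norm_inv, Real.norm_of_nonneg hr.le, inv_mul_eq_div, lt_div_iff₀ hr]
  simpa using hx

theorem per_zero {d : ℕ} {χ : (Fin d → ℝ) → ℝ}
    (hs : ∀ x, 1 < euclNorm x → χ x = 0) {r : ℝ} (hr : 0 < r) {x z : Fin d → ℝ}
    (hx : (x, z) ∉ closeSet d r) : periodised (scaledMollifier χ r) (x - z) = 0 := by
  unfold periodised
  have : ∀ k : Fin d → ℤ, scaledMollifier χ r (x - z + latVec k) = 0 := fun k =>
    scaled_zero hs hr (by by_contra hk; exact hx ⟨k, not_lt.1 hk⟩)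
  simp [this]

theorem per_bdd_s15 {d : ℕ} {χ : (Fin d → ℝ) → ℝ}
    (hs : ∀ x, 1 < euclNorm x → χ x = 0) {M : ℝ} (hM : ∀ x, |χ x| ≤ M)
    {r : ℝ} (hr : 0 < r) {x z : Fin d → ℝ}
    (hx : x ∈ Tcube d) (hz : z ∈ Tcube d) :
    |periodised (scaledMollifier χ r) (x - z)| ≤ (2 * r + 3) ^ d * ((r ^ d)⁻¹ * M) := by
  classical
  set S : Finset (Fin d → ℤ) := Fintype.piFinset fun _ => Finset.Icc (-⌊r + 1⌋) ⌊r + 1⌋ with hS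
  have h0 : ∀ k ∉ S, scaledMollifier χ r (x - z + latVec k) = 0 := by
    intro k hk
    apply scaled_zero hs hr
    by_contra hc
    apply hk
    rw [hS, Fintype.mem_piFinset]
    intro i
    have h1 := (norm_le_pi_norm _ i).trans (not_lt.1 hc)
    have hxi := hx i (Set.mem_univ i)
    have hyi := hz i (Set.mem_univ i)
    simp only [Pi.add_apply, Pi.sub_apply, latVec, Real.norm_eq_abs, abs_le] at h1
    rw [Finset.mem_Icc, neg_le]
    constructor
    · rw [Int.le_floor]; push_cast; linarith [hxi.1, hxi.2, hyi.1, hyi.2]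
    · rw [Int.le_floor]; linarith [hxi.1, hxi.2, hyi.1, hyi.2]
  unfold periodised
  rw [tsum_eq_sum h0]
  have hM0 : 0 ≤ M := (abs_nonneg _).trans (hM 0)
  calc _ ≤ ∑ k ∈ S, |scaledMollifier χ r (x - z + latVec k)| := Finset.abs_sum_le_sum_abs _ _
    _ ≤ ∑ k ∈ S, (r ^ d)⁻¹ * M := by
        refine Finset.sum_le_sum fun k _ => ?_
        unfold scaledMollifier
        rw [abs_mul, abs_of_nonneg (by positivity : 0 ≤ (r ^ d)⁻¹)]
        gcongr
        exact hM _
    _ = (S.card : ℝ) * ((r ^ d)⁻¹ * M) := by simp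
    _ ≤ _ := by
        gcongr
        rw [hS, Fintype.card_piFinset]
        simp only [Int.card_Icc, Finset.prod_const, Finset.card_univ, Fintype.card_fin]
        push_cast
        gcongr
        have hf : 0 ≤ ⌊r + 1⌋ := Int.floor_nonneg.2 (by linarith)
        have : (((⌊r + 1⌋ + 1 - -⌊r + 1⌋).toNat : ℤ) : ℝ) = 2 * ⌊r + 1⌋ + 1 := by
          rw [Int.toNat_of_nonneg (by omega)]; push_cast; ring
        have h2 := Int.floor_le (r + 1)
        have h3 : (((⌊r + 1⌋ + 1 - -⌊r + 1⌋).toNat : ℕ) : ℝ) = 2 * ⌊r + 1⌋ + 1 := by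
          rw [← this]; norm_cast
        linarith

theorem pointwise_bd {d : ℕ} {χ : (Fin d → ℝ) → ℝ}
    (hs : ∀ x, 1 < euclNorm x → χ x = 0) {M : ℝ} (hM : ∀ x, |χ x| ≤ M)
    {r : ℝ} (hr : 0 < r) {ν : Measure (Fin d → ℝ)} (hν : IsTorusProb ν)
    {h : (Fin d → ℝ) → ℝ}
    (cpl : Measure ((Fin d → ℝ) × (Fin d → ℝ)))
    (hcpl : IsCoupling cpl (densMeasure h) ν) {x : Fin d → ℝ} (hx : x ∈ Tcube d) :
    ‖∫ y, periodised (scaledMollifier χ r) (x - y) ∂ν‖ₑ ≤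
      ENNReal.ofReal ((2 * r + 3) ^ d * ((r ^ d)⁻¹ * M)) *
        (∫⁻ y in {y | (x, y) ∈ closeSet d (2 * r)}, ENNReal.ofReal (h y) ∂torusMeasure d) +
      ENNReal.ofReal ((2 * r + 3) ^ d * ((r ^ d)⁻¹ * M)) * cpl {z | r ≤ tdist z.1 z.2} := by
  set B := ENNReal.ofReal ((2 * r + 3) ^ d * ((r ^ d)⁻¹ * M)) with hB
  set Ex := {y | (x, y) ∈ closeSet d (2 * r)} with hEx
  have hExm : MeasurableSet Ex := measurable_prodMk_left (closeSet_meas d (2 * r))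
  have hFm : MeasurableSet {z : (Fin d → ℝ) × (Fin d → ℝ) | r ≤ tdist z.1 z.2} :=
    measurableSet_le measurable_const (tdist_meas d)
  have hae : ∀ᵐ z ∂cpl, z.2 ∈ Tcube d := by
    have h1 : ∀ᵐ y ∂ν, y ∈ Tcube d := hν.2
    rw [← hcpl.2] at h1
    exact ae_of_ae_map measurable_snd.aemeasurable h1
  calc _ ≤ ∫⁻ y, ‖periodised (scaledMollifier χ r) (x - y)‖ₑ ∂ν :=
        enorm_integral_le_lintegral_enorm _
    _ ≤ ∫⁻ z, ‖periodised (scaledMollifier χ r) (x - z.2)‖ₑ ∂cpl := by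
        conv_lhs => rw [← hcpl.2]
        exact lintegral_map_le _ _
    _ ≤ ∫⁻ z, (Ex.indicator (fun _ => B) z.1 +
          {z : (Fin d → ℝ) × (Fin d → ℝ) | r ≤ tdist z.1 z.2}.indicator (fun _ => B) z) ∂cpl := by
        refine lintegral_mono_ae ?_
        filter_upwards [hae] with z hz
        have hb : ‖periodised (scaledMollifier χ r) (x - z.2)‖ₑ ≤ B := by
          rw [Real.enorm_eq_ofReal_abs]
          exact ENNReal.ofReal_le_ofReal (per_bdd_s15 hs hM hr hx hz)
        by_cases h1 : r ≤ tdist z.1 z.2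
        · rw [Set.indicator_of_mem (s := {z : (Fin d → ℝ) × (Fin d → ℝ) | r ≤ tdist z.1 z.2}) h1]
          exact hb.trans le_add_self
        · by_cases h2 : (x, z.2) ∈ closeSet d r
          · have h3 : z.1 ∈ Ex := by
              have := closeSet_trans h2 (closeSet_symm (tdist_lt (not_le.1 h1)))
              rw [← two_mul] at this
              exact this
            rw [Set.indicator_of_mem h3]
            exact hb.trans le_self_add
          · rw [per_zero hs hr h2]; simp
    _ = ∫⁻ z, Ex.indicator (fun _ => B) z.1 ∂cpl + B * cpl {z | r ≤ tdist z.1 z.2} := by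
        rw [lintegral_add_right _ (measurable_const.indicator hFm), lintegral_indicator_const hFm]
    _ = _ := by
        congr 1
        have := lintegral_map (μ := cpl) (f := Ex.indicator (fun _ => B))
          (measurable_const.indicator hExm) measurable_fst
        rw [← this, hcpl.1, lintegral_indicator_const hExm, densMeasure, withDensity_apply _ hExm]

theorem markov_bd {d : ℕ} {r q : ℝ} (hr : 0 < r) (hq : 1 ≤ q)
    (cpl : Measure ((Fin d → ℝ) × (Fin d → ℝ))) [IsProbabilityMeasure cpl] :
    cpl {z | r ≤ tdist z.1 z.2} ≤
      ENNReal.ofReal (r ^ (-q) * ∫ z, tdist z.1 z.2 ^ q ∂cpl) := by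
  have hint : Integrable (fun z : (Fin d → ℝ) × (Fin d → ℝ) => tdist z.1 z.2 ^ q) cpl := by
    refine Integrable.of_bound ((tdist_meas d).pow_const q).aestronglyMeasurable
      (Real.sqrt d ^ q) (Filter.Eventually.of_forall fun z => ?_)
    rw [Real.norm_of_nonneg (Real.rpow_nonneg (tdist_nonneg _ _) _)]
    exact Real.rpow_le_rpow (tdist_nonneg _ _) (tdist_le _ _) (by linarith)
  have h1 := mul_meas_ge_le_integral_of_nonneg (μ := cpl)
    (Filter.Eventually.of_forall fun z => Real.rpow_nonneg (tdist_nonneg z.1 z.2) q) hint (r ^ q)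
  have h2 : {z : (Fin d → ℝ) × (Fin d → ℝ) | r ≤ tdist z.1 z.2} ⊆
      {z | r ^ q ≤ tdist z.1 z.2 ^ q} := fun z hz =>
    Real.rpow_le_rpow hr.le hz (by linarith)
  refine (measure_mono h2).trans ?_
  rw [← ofReal_measureReal]
  refine ENNReal.ofReal_le_ofReal ?_
  rw [Real.rpow_neg hr.le, inv_mul_eq_div, le_div_iff₀ (by positivity), mul_comm]
  exact h1

theorem aux_cmul {X : Type*} [MeasurableSpace X] (μ : Measure X) (b : ℝ) (F : X → ℝ≥0∞)
    (p : ℝ≥0∞) : eLpNorm (fun x => ENNReal.ofReal b * F x) p μ ≤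
      ENNReal.ofReal b * eLpNorm F p μ := by
  have := eLpNorm_le_nnreal_smul_eLpNorm_of_ae_le_mul' (μ := μ) (c := b.toNNReal)
    (f := fun x => ENNReal.ofReal b * F x) (g := F)
    (Filter.Eventually.of_forall fun x => by simp [ENNReal.ofReal]) p
  rw [ENNReal.smul_def, smul_eq_mul] at this
  exact this

theorem aux_cst {X : Type*} [MeasurableSpace X] (μ : Measure X) [IsProbabilityMeasure μ]
    (b : ℝ≥0∞) (p : ℝ≥0∞) : eLpNorm (fun _ : X => b) p μ ≤ b := by
  have := eLpNorm_le_of_ae_enorm_bound (p := p) (μ := μ) (f := fun _ : X => b) (C := b)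
    (Filter.Eventually.of_forall fun x => by simp)
  simpa using this

/-- `L^p` estimate on a mollified measure in terms of a reference
density: `‖χ_r ∗ ν‖_{L^p} ≤ C (‖h‖_{L^p} + r^{−(q+d)} W_q^q(h dx, ν))`. -/
theorem statement15 (d : ℕ) (χ : (Fin d → ℝ) → ℝ)
    (hχ_smooth : ContDiff ℝ (⊤ : ℕ∞) χ) (hχ_nonneg : ∀ x, 0 ≤ χ x)
    (hχ_supp : ∀ x, 1 < euclNorm x → χ x = 0)
    (hχ_int : (∫ x, χ x) = 1) :
    ∃ C : ℝ, 0 < C ∧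
      ∀ ν : Measure (Fin d → ℝ), IsTorusProb ν →
      ∀ h : (Fin d → ℝ) → ℝ,
        Measurable h → ZPeriodic h → (∀ x, 0 ≤ h x) →
        (∫ x, h x ∂(torusMeasure d)) = 1 → MemLp h ⊤ (torusMeasure d) →
      ∀ r : ℝ, 0 < r → ∀ p : ℝ≥0∞, 1 ≤ p → ∀ q : ℝ, 1 ≤ q →
        eLpNorm (fun x => ∫ y, periodised (scaledMollifier χ r) (x - y) ∂ν) p
            (torusMeasure d) ≤
          ENNReal.ofReal (C * (LpNorm p h +
            r ^ (-(q + (d : ℝ))) * WassPow q (densMeasure h) ν)) := by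
  obtain ⟨M, hM0, hM⟩ := chi_bdd hχ_smooth.continuous hχ_supp
  have := torus_prob_s15 d
  have hTm : MeasurableSet (Tcube d) := MeasurableSet.univ_pi fun _ => measurableSet_Ico
  have hTae : ∀ᵐ x ∂(torusMeasure d), x ∈ Tcube d := ae_restrict_mem hTm
  refine ⟨M * 140 ^ d, by positivity, ?_⟩
  intro ν hν h hh _ hh0 hh1 hhtop r hr p hp q hq
  have := hν.1
  have hLfin : eLpNorm h p (torusMeasure d) ≠ ⊤ := (hhtop.mono_exponent le_top).2.ne
  have hL : eLpNorm h p (torusMeasure d) = ENNReal.ofReal (LpNorm p h) :=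
    (ENNReal.ofReal_toReal hLfin).symm
  have hL0 : 0 ≤ LpNorm p h := ENNReal.toReal_nonneg
  have hhint : Integrable h (torusMeasure d) := by
    by_contra hc
    rw [integral_undef hc] at hh1
    norm_num at hh1
  have hlint : ∫⁻ x, ENNReal.ofReal (h x) ∂(torusMeasure d) = 1 := by
    rw [← ofReal_integral_eq_lintegral_ofReal hhint (Filter.Eventually.of_forall hh0), hh1,
      ENNReal.ofReal_one]
  have hdens : IsProbabilityMeasure (densMeasure h) := by
    constructor
    rw [densMeasure, withDensity_apply _ MeasurableSet.univ, Measure.restrict_univ, hlint]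
  have hW0 : 0 ≤ WassPow q (densMeasure h) ν := by
    refine Real.sInf_nonneg ?_
    rintro c ⟨cpl, _, _, rfl⟩
    exact integral_nonneg fun z => Real.rpow_nonneg (tdist_nonneg _ _) _
  rcases le_or_gt r 1 with hr1 | hr1
  · -- small scales
    have hBle : (2 * r + 3) ^ d * ((r ^ d)⁻¹ * M) ≤ 5 ^ d * ((r ^ d)⁻¹ * M) := by
      gcongr; linarith
    have main : ∀ c, c ∈ { c | ∃ cpl : Measure ((Fin d → ℝ) × (Fin d → ℝ)),
        IsProbabilityMeasure cpl ∧ IsCoupling cpl (densMeasure h) ν ∧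
          c = ∫ z, tdist z.1 z.2 ^ q ∂cpl } →
        eLpNorm (fun x => ∫ y, periodised (scaledMollifier χ r) (x - y) ∂ν) p (torusMeasure d) ≤
          ENNReal.ofReal (M * 140 ^ d * (LpNorm p h + r ^ (-(q + (d : ℝ))) * c)) := by
      rintro c ⟨cpl, hcp, hcpl, rfl⟩
      set c := ∫ z, tdist z.1 z.2 ^ q ∂cpl with hc
      have hc0 : 0 ≤ c := integral_nonneg fun z => Real.rpow_nonneg (tdist_nonneg _ _) _
      set B := ENNReal.ofReal ((2 * r + 3) ^ d * ((r ^ d)⁻¹ * M)) with hB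
      have hBB : B ≤ ENNReal.ofReal (5 ^ d * ((r ^ d)⁻¹ * M)) := ENNReal.ofReal_le_ofReal hBle
      set F : (Fin d → ℝ) → ℝ≥0∞ := fun x =>
        ∫⁻ y in {y | (x, y) ∈ closeSet d (2 * r)}, ENNReal.ofReal (h y) ∂torusMeasure d with hF
      have hFm : Measurable F := by
        have hm : Measurable fun z : (Fin d → ℝ) × (Fin d → ℝ) =>
            (closeSet d (2 * r)).indicator (fun z => ENNReal.ofReal (h z.2)) z :=
          ((hh.comp measurable_snd).ennreal_ofReal).indicator (closeSet_meas d _)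
        have := hm.lintegral_prod_right' (ν := torusMeasure d)
        convert this using 2 with x
        have hExm : MeasurableSet {y | (x, y) ∈ closeSet d (2 * r)} :=
          measurable_prodMk_left (closeSet_meas d (2 * r))
        rw [hF]
        simp only
        rw [← lintegral_indicator hExm]
        rfl
      have hFn : eLpNorm F p (torusMeasure d) ≤
          ENNReal.ofReal (28 ^ d * r ^ d) * ENNReal.ofReal (LpNorm p h) := by
        refine (aux_schur (torusMeasure d) (closeSet d (2 * r)) (closeSet_meas d _)
          (ENNReal.ofReal (28 ^ d * r ^ d)) ?_ ?_ (fun y => ENNReal.ofReal (h y))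
          hh.ennreal_ofReal p hp).trans ?_
        · filter_upwards [hTae] with x hx
          exact closeSet_vol hr hr1 hx
        · filter_upwards [hTae] with x hx
          refine (measure_mono ?_).trans (closeSet_vol hr hr1 hx)
          intro y hy
          exact closeSet_symm hy
        · rw [← hL]
          gcongr 1
          refine eLpNorm_mono_enorm fun x => ?_
          rw [Real.enorm_of_nonneg (hh0 x), enorm_eq_self]
      have hmk := markov_bd (d := d) hr hq cpl
      rw [← hc] at hmk
      calc _ ≤ eLpNorm ((fun x => B * F x) + fun _ => B * cpl {z | r ≤ tdist z.1 z.2}) p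
              (torusMeasure d) := by
            refine eLpNorm_mono_enorm_ae ?_
            filter_upwards [hTae] with x hx
            rw [enorm_eq_self]
            exact pointwise_bd hχ_supp hM hr hν cpl hcpl hx
        _ ≤ eLpNorm (fun x => B * F x) p (torusMeasure d) +
              eLpNorm (fun _ : Fin d → ℝ => B * cpl {z | r ≤ tdist z.1 z.2}) p
                (torusMeasure d) :=
            eLpNorm_add_le (hFm.const_mul B).aestronglyMeasurable
              aestronglyMeasurable_const hp
        _ ≤ B * eLpNorm F p (torusMeasure d) + B * cpl {z | r ≤ tdist z.1 z.2} :=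
            add_le_add (aux_cmul _ _ _ _) (aux_cst _ _ _)
        _ ≤ ENNReal.ofReal (5 ^ d * ((r ^ d)⁻¹ * M)) *
              (ENNReal.ofReal (28 ^ d * r ^ d) * ENNReal.ofReal (LpNorm p h)) +
            ENNReal.ofReal (5 ^ d * ((r ^ d)⁻¹ * M)) * ENNReal.ofReal (r ^ (-q) * c) := by
            gcongr
        _ = ENNReal.ofReal (5 ^ d * ((r ^ d)⁻¹ * M) * ((28 ^ d * r ^ d) * LpNorm p h) +
              5 ^ d * ((r ^ d)⁻¹ * M) * (r ^ (-q) * c)) := by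
            rw [← ENNReal.ofReal_mul (by positivity), ← ENNReal.ofReal_mul (by positivity),
              ← ENNReal.ofReal_mul (by positivity), ← ENNReal.ofReal_add (by positivity)
              (by positivity)]
        _ ≤ _ := by
            refine ENNReal.ofReal_le_ofReal ?_
            have e1 : r ^ (-(q + (d : ℝ))) = r ^ (-q) * (r ^ d)⁻¹ := by
              rw [neg_add, Real.rpow_add hr, Real.rpow_neg hr.le (d : ℝ), Real.rpow_natCast]
            have e2 : (140 : ℝ) ^ d = 5 ^ d * 28 ^ d := by rw [← mul_pow]; norm_num
            have e3 : (r ^ d)⁻¹ * r ^ d = 1 := inv_mul_cancel₀ (by positivity)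
            have e4 : (1 : ℝ) ≤ 28 ^ d := one_le_pow₀ (by norm_num)
            rw [e1, mul_add]
            refine add_le_add (le_of_eq ?_) ?_
            · rw [e2]
              linear_combination (5 ^ d * M * 28 ^ d * LpNorm p h) * e3
            · rw [e2]
              have : 0 ≤ M * 5 ^ d * (r ^ (-q) * (r ^ d)⁻¹ * c) := by positivity
              nlinarith
    have hne : { c | ∃ cpl : Measure ((Fin d → ℝ) × (Fin d → ℝ)),
        IsProbabilityMeasure cpl ∧ IsCoupling cpl (densMeasure h) ν ∧
          c = ∫ z, tdist z.1 z.2 ^ q ∂cpl }.Nonempty :=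
      ⟨_, (densMeasure h).prod ν, inferInstance,
        ⟨by rw [← Measure.fst, Measure.fst_prod], by rw [← Measure.snd, Measure.snd_prod]⟩, rfl⟩
    obtain ⟨c₀, hc₀⟩ := hne
    have hfin := ((main c₀ hc₀).trans_lt ENNReal.ofReal_lt_top).ne
    set A := eLpNorm (fun x => ∫ y, periodised (scaledMollifier χ r) (x - y) ∂ν) p
      (torusMeasure d) with hA
    have hR : 0 < r ^ (-(q + (d : ℝ))) := Real.rpow_pos_of_pos hr _
    have hC : 0 < M * 140 ^ d := by positivity
    rw [← ENNReal.ofReal_toReal hfin]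
    refine ENNReal.ofReal_le_ofReal ?_
    have hinf : (A.toReal / (M * 140 ^ d) - LpNorm p h) / r ^ (-(q + (d : ℝ))) ≤
        WassPow q (densMeasure h) ν := by
      refine le_csInf ⟨c₀, hc₀⟩ fun c hc => ?_
      have h1 := main c hc
      have hc0 : 0 ≤ c := by
        obtain ⟨cpl, _, _, rfl⟩ := hc
        exact integral_nonneg fun z => Real.rpow_nonneg (tdist_nonneg _ _) _
      have h2 := ENNReal.toReal_le_of_le_ofReal (by positivity) h1
      rw [div_le_iff₀ hR, sub_le_iff_le_add, div_le_iff₀ hC]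
      linarith
    rw [div_le_iff₀ hR, sub_le_iff_le_add, div_le_iff₀ hC] at hinf
    linarith
  · -- large scales
    have hone : 1 ≤ LpNorm p h := by
      have h1 : (1 : ℝ≥0∞) ≤ eLpNorm h p (torusMeasure d) := by
        refine le_trans (le_of_eq ?_)
          (eLpNorm_le_eLpNorm_of_exponent_le hp hh.aestronglyMeasurable)
        rw [eLpNorm_one_eq_lintegral_enorm, ← hlint]
        exact lintegral_congr fun x => (Real.enorm_of_nonneg (hh0 x)).symm
      rw [hL, ENNReal.one_le_ofReal] at h1
      exact h1
    have hbd : (2 * r + 3) ^ d * ((r ^ d)⁻¹ * M) ≤ M * 140 ^ d := by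
      have : (2 * r + 3) ^ d ≤ (140 * r) ^ d := by gcongr; linarith
      calc _ ≤ (140 * r) ^ d * ((r ^ d)⁻¹ * M) := by gcongr
        _ = M * 140 ^ d := by rw [mul_pow]; field_simp
    have hb := eLpNorm_le_of_ae_enorm_bound (p := p) (μ := torusMeasure d)
      (f := fun x => ∫ y, periodised (scaledMollifier χ r) (x - y) ∂ν)
      (C := ENNReal.ofReal (M * 140 ^ d)) ?_
    · refine (hb.trans (le_of_eq (by simp))).trans (ENNReal.ofReal_le_ofReal (?_ :
        M * 140 ^ d ≤ _))
      refine le_mul_of_one_le_right (by positivity) ?_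
      have : 0 ≤ r ^ (-(q + (d : ℝ))) * WassPow q (densMeasure h) ν := by positivity
      linarith
    · filter_upwards [hTae] with x hx
      have hνT : ∀ᵐ y ∂ν, y ∈ Tcube d := hν.2
      refine (enorm_integral_le_lintegral_enorm _).trans ?_
      refine (lintegral_mono_ae (g := fun _ => ENNReal.ofReal (M * 140 ^ d)) ?_).trans
        (by simp)
      filter_upwards [hνT] with y hy
      rw [Real.enorm_eq_ofReal_abs]
      exact ENNReal.ofReal_le_ofReal ((per_bdd_s15 hχ_supp hM hr hx hy).trans hbd)
end
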